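/- arXiv:2105.06416 — 2 statements merged into one kernel-verified Lean document; each statement's English description precedes it below -/
import Mathlib

section
/- Let 1 < ρ < 2. There exists a constant c > 0, depending only on ρ, such that for every α > 0, ∫_0^∞ E_ρ(−α t^ρ)^2 dt ≤ c · α^{−1/ρ}; in particular the function t ↦ E_ρ(−α t^ρ) belongs to L^2(0, ∞). -/
/-!
Write `f t = E_ρ(-t^ρ)`. The substitution `t ↦ α^(1/ρ) t` reduces the claim to `f ∈ L²(0, ∞)`.
Near the origin `f` is bounded (`abs_ml_le`), so it suffices that `f t = O(1/t)` at infinity.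

The series can be integrated term by term against `t e^{-st}` on `Re s = 2`, and the result is
`∫ t f(t) e^{-st} dt = H(s)` with `H(s) = s^ρ (s^ρ - (ρ-1)) / (s² (s^ρ + 1)²)` (`laplace_ml`).
Since `ρ < 2`, the power `s^ρ` of a number with `Re s > 0` stays in a sector that avoids `-1`, so
`H` is holomorphic in the right half-plane. It is dominated there by a constant times
`min (|Im s|^(ρ-2), |Im s|^(-2))` (`norm_mlLaplace_le`), which is integrable over a vertical line
because `ρ > 1`.
Fourier inversion on `Re s = 2` recovers `t f(t)` (`inversion_two`), Cauchy's theorem moves the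
contour to any `Re s = σ > 0` (`integral_vertical_eq`), and `σ → 0` gives a bound on `|t f(t)|`
uniform in `t` (`abs_mul_ml_le`).
-/

open MeasureTheory

/-- The Mittag-Leffler function `E_ρ(x) = ∑ x^k / Γ(ρ k + 1)`. -/
noncomputable def mittagLeffler (ρ x : ℝ) : ℝ :=
  ∑' k : ℕ, x ^ k / Real.Gamma (ρ * k + 1)

section
open Set Filter Topology Complex

/-! ### Laplace transforms of powers -/

lemma integrableOn_rpow_mul_exp (x r : ℝ) (hx : 0 ≤ x) (hr : 0 < r) :
    IntegrableOn (fun t : ℝ => t ^ x * Real.exp (-(r * t))) (Ioi 0) := by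
  have := integrableOn_rpow_mul_exp_neg_mul_rpow (s := x) (p := 1) (b := r)
    (by linarith) one_pos hr
  simpa [Real.rpow_one] using this

lemma norm_rpow_mul_cexp (x : ℝ) (s : ℂ) {t : ℝ} (ht : 0 < t) :
    ‖((t ^ x : ℝ) : ℂ) * cexp (-(s * t))‖ = t ^ x * Real.exp (-(s.re * t)) := by
  rw [norm_mul, Complex.norm_real, Complex.norm_exp, Real.norm_of_nonneg (by positivity)]
  simp

lemma aestronglyMeasurable_rpow_mul_cexp (x : ℝ) (s : ℂ) :
    AEStronglyMeasurable (fun t : ℝ => ((t ^ x : ℝ) : ℂ) * cexp (-(s * t)))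
      (volume.restrict (Ioi 0)) := by
  refine ContinuousOn.aestronglyMeasurable ?_ measurableSet_Ioi
  refine ContinuousOn.mul (continuous_ofReal.comp_continuousOn ?_) (by fun_prop)
  exact fun t ht => (Real.continuousAt_rpow_const t x (Or.inl (ne_of_gt ht))).continuousWithinAt

lemma integrableOn_rpow_mul_cexp (x : ℝ) (hx : 0 ≤ x) (s : ℂ) (hs : 0 < s.re) :
    IntegrableOn (fun t : ℝ => ((t ^ x : ℝ) : ℂ) * cexp (-(s * t))) (Ioi 0) := by
  refine (integrableOn_rpow_mul_exp x s.re hx hs).mono'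
    (aestronglyMeasurable_rpow_mul_cexp x s) ?_
  filter_upwards [ae_restrict_mem measurableSet_Ioi] with t ht
  exact (norm_rpow_mul_cexp x s ht).le

lemma isOpen_re_pos : IsOpen {s : ℂ | 0 < s.re} := isOpen_lt continuous_const continuous_re

/-- Differentiation under the integral sign; near `s` the derivative is dominated by the decay
rate `Re s / 2`. -/
lemma differentiableOn_laplace_rpow (x : ℝ) (hx : 0 ≤ x) :
    DifferentiableOn ℂ (fun s : ℂ => ∫ t in Ioi (0 : ℝ), ((t ^ x : ℝ) : ℂ) * cexp (-(s * t)))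
      {s : ℂ | 0 < s.re} := by
  intro s hs
  have hs' : 0 < s.re := hs
  have hU : {z : ℂ | s.re / 2 < z.re} ∈ 𝓝 s :=
    (isOpen_lt continuous_const continuous_re).mem_nhds (by simpa using hs')
  refine (hasDerivAt_integral_of_dominated_loc_of_deriv_le (𝕜 := ℂ) (μ := volume.restrict (Ioi 0))
    (F := fun (s : ℂ) (t : ℝ) => ((t ^ x : ℝ) : ℂ) * cexp (-(s * t)))
    (F' := fun (s : ℂ) (t : ℝ) => -(((t ^ (x + 1) : ℝ) : ℂ) * cexp (-(s * t))))
    (bound := fun t => t ^ (x + 1) * Real.exp (-(s.re / 2 * t))) hU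
    (Eventually.of_forall fun z => aestronglyMeasurable_rpow_mul_cexp x z)
    (integrableOn_rpow_mul_cexp x hx s hs') (aestronglyMeasurable_rpow_mul_cexp _ s).neg
    ?_ (integrableOn_rpow_mul_exp _ _ (by linarith) (by linarith))
    ?_).2.differentiableAt.differentiableWithinAt
  · filter_upwards [ae_restrict_mem measurableSet_Ioi] with t ht z hz
    have ht' : 0 < t := ht
    rw [norm_neg, norm_rpow_mul_cexp _ _ ht]
    have : s.re / 2 * t ≤ z.re * t := mul_le_mul_of_nonneg_right (le_of_lt hz) ht'.le
    gcongr
  · filter_upwards [ae_restrict_mem measurableSet_Ioi] with t ht z hz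
    have h1 : HasDerivAt (fun z : ℂ => -(z * t)) (-(1 * (t : ℂ))) z :=
      ((hasDerivAt_id z).mul_const _).neg
    convert! (h1.cexp.const_mul (((t ^ x : ℝ) : ℂ))) using 1
    rw [Real.rpow_add_one (ne_of_gt ht)]
    push_cast
    ring

/-- Identity theorem: both sides are holomorphic in the half-plane and agree for real `s`. -/
lemma laplace_rpow (x : ℝ) (hx : 0 ≤ x) (s : ℂ) (hs : 0 < s.re) :
    ∫ t in Ioi (0 : ℝ), ((t ^ x : ℝ) : ℂ) * cexp (-(s * t))
      = s ^ (-(x + 1) : ℂ) * (Real.Gamma (x + 1) : ℂ) := by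
  have hA := (differentiableOn_laplace_rpow x hx).analyticOnNhd isOpen_re_pos
  have hB : DifferentiableOn ℂ (fun s : ℂ => s ^ (-(x + 1) : ℂ) * (Real.Gamma (x + 1) : ℂ))
      {s : ℂ | 0 < s.re} := by
    intro z hz
    refine DifferentiableAt.differentiableWithinAt ?_
    refine DifferentiableAt.mul_const (DifferentiableAt.cpow_const differentiableAt_id (Or.inl hz)) _
  refine hA.eqOn_of_preconnected_of_frequently_eq (hB.analyticOnNhd isOpen_re_pos)
    (convex_halfSpace_re_gt 0).isPreconnected (z₀ := 1) (by simp) ?_ hs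
  have hr : ∀ r : ℝ, 0 < r → (∫ t in Ioi (0 : ℝ), ((t ^ x : ℝ) : ℂ) * cexp (-((r : ℂ) * t)))
      = (r : ℂ) ^ (-(x + 1) : ℂ) * (Real.Gamma (x + 1) : ℂ) := by
    intro r hr
    have := Real.integral_rpow_mul_exp_neg_mul_Ioi (a := x + 1) (by linarith) hr
    have h2 : (∫ t in Ioi (0 : ℝ), ((t ^ x : ℝ) : ℂ) * cexp (-((r : ℂ) * t)))
        = ((∫ t in Ioi (0 : ℝ), t ^ (x + 1 - 1) * Real.exp (-(r * t)) : ℝ) : ℂ) := by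
      rw [← integral_complex_ofReal]
      simp
    rw [h2, this, one_div, Real.inv_rpow hr.le, ← Real.rpow_neg hr.le]
    push_cast [Complex.ofReal_cpow hr.le]
    simp
  have ht : Tendsto (fun r : ℝ => (r : ℂ)) (𝓝[>] 1) (𝓝[≠] 1) := by
    refine tendsto_nhdsWithin_iff.2 ⟨?_, ?_⟩
    · exact (continuous_ofReal.tendsto' 1 1 (by simp)).mono_left nhdsWithin_le_nhds
    · filter_upwards [self_mem_nhdsWithin] with r hr
      have : (1 : ℝ) < r := hr
      simp only [mem_compl_iff, mem_singleton_iff]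
      exact_mod_cast this.ne'
  refine ht.frequently (Eventually.frequently ?_)
  filter_upwards [self_mem_nhdsWithin] with r h
  exact hr r (lt_trans one_pos h)

/-- Stirling-free lower bound for `Γ`: restrict the Euler integral to `(t, ∞)`. -/
lemma rpow_le_Gamma_mul_exp (x t : ℝ) (hx : 0 ≤ x) (ht : 0 < t) :
    t ^ x ≤ Real.Gamma (x + 1) * Real.exp t := by
  have h1 := Real.GammaIntegral_convergent (s := x + 1) (by linarith)
  have h2 : Real.exp (-t) * t ^ x ≤ Real.Gamma (x + 1) := by
    rw [Real.Gamma_eq_integral (by linarith)]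
    calc Real.exp (-t) * t ^ x = ∫ u in Ioi t, Real.exp (-u) * t ^ x := by
          rw [integral_mul_const, integral_exp_neg_Ioi]
      _ ≤ ∫ u in Ioi t, Real.exp (-u) * u ^ (x + 1 - 1) := by
          refine setIntegral_mono_on ((integrableOn_exp_neg_Ioi t).mul_const _)
            (h1.mono_set (Ioi_subset_Ioi ht.le)) measurableSet_Ioi ?_
          intro u hu
          have : t < u := hu
          rw [add_sub_cancel_right]
          gcongr
      _ ≤ _ := by
          refine setIntegral_mono_set h1 ?_ (Ioi_subset_Ioi ht.le).eventuallyLE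
          filter_upwards [ae_restrict_mem measurableSet_Ioi] with u hu
          have : 0 < u := hu
          simp only [Pi.zero_apply]
          positivity
  calc t ^ x = (Real.exp (-t) * t ^ x) * Real.exp t := by
        rw [mul_right_comm, ← Real.exp_add]; simp
    _ ≤ _ := by gcongr

/-! ### The series and its Laplace transform -/

/-- The free parameter `σ` compares the series of `f` with a geometric series, uniformly on
bounded intervals once `σ > 1`. -/
lemma norm_mlTerm_le {ρ σ t : ℝ} (hρ : 0 < ρ) (hσ : 0 < σ) (ht : 0 < t) (k : ℕ) :
    ‖(-(t ^ ρ)) ^ k / Real.Gamma (ρ * k + 1)‖ ≤ Real.exp (σ * t) * ((σ ^ ρ)⁻¹) ^ k := by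
  have hG : 0 < Real.Gamma (ρ * k + 1) := Real.Gamma_pos_of_pos (by positivity)
  have h := rpow_le_Gamma_mul_exp (ρ * k) (σ * t) (by positivity) (by positivity)
  rw [Real.rpow_mul (by positivity), Real.rpow_natCast, Real.mul_rpow hσ.le ht.le, mul_pow] at h
  have hs : 0 < (σ ^ ρ) ^ k := by positivity
  rw [norm_div, norm_pow, norm_neg, Real.norm_of_nonneg (by positivity : (0 : ℝ) ≤ t ^ ρ),
    Real.norm_of_nonneg hG.le, div_le_iff₀ hG, inv_pow, ← div_eq_mul_inv, div_mul_eq_mul_div,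
    le_div_iff₀ hs]
  linarith

lemma inv_rpow_lt_one {ρ σ : ℝ} (hρ : 0 < ρ) (hσ : 1 < σ) : (σ ^ ρ)⁻¹ < 1 :=
  inv_lt_one_of_one_lt₀ (Real.one_lt_rpow hσ hρ)

lemma summable_geom_inv {ρ σ : ℝ} (hρ : 0 < ρ) (hσ : 1 < σ) :
    Summable fun k : ℕ => ((σ ^ ρ)⁻¹) ^ k :=
  summable_geometric_of_lt_one (by positivity) (inv_rpow_lt_one hρ hσ)

/-- An exponential a priori bound, which makes the Laplace transform converge on `Re s = 2`. -/
lemma abs_ml_le {ρ t : ℝ} (hρ : 0 < ρ) (ht : 0 < t) :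
    |mittagLeffler ρ (-(t ^ ρ))| ≤
      (1 - ((3 / 2 : ℝ) ^ ρ)⁻¹)⁻¹ * Real.exp (3 / 2 * t) := by
  rw [mul_comm]
  refine tsum_of_norm_bounded ?_ (norm_mlTerm_le (σ := 3 / 2) hρ (by norm_num) ht)
  exact (hasSum_geometric_of_lt_one (by positivity) (inv_rpow_lt_one hρ (by norm_num))).mul_left _

lemma continuousOn_ml {ρ : ℝ} (hρ : 0 < ρ) :
    ContinuousOn (fun t : ℝ => mittagLeffler ρ (-(t ^ ρ))) (Ioi 0) := by
  intro t ht
  have ht' : 0 < t := ht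
  refine ContinuousAt.continuousWithinAt ?_
  have hc : ContinuousOn (fun t : ℝ => mittagLeffler ρ (-(t ^ ρ))) (Ioo 0 (t + 1)) := by
    refine continuousOn_tsum (u := fun k => Real.exp (2 * (t + 1)) * (((2 : ℝ) ^ ρ)⁻¹) ^ k) ?_
      ((summable_geom_inv hρ (by norm_num)).mul_left _) ?_
    · intro k
      have h1 : ContinuousOn (fun t : ℝ => t ^ ρ) (Ioo 0 (t + 1)) := fun u hu =>
        (Real.continuousAt_rpow_const u ρ (Or.inr hρ.le)).continuousWithinAt
      exact (h1.neg.pow k).div_const _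
    · intro k u hu
      refine (norm_mlTerm_le (σ := 2) hρ (by norm_num) hu.1 k).trans ?_
      have := hu.2
      gcongr
  exact hc.continuousAt (Ioo_mem_nhds ht' (by linarith))

/-- The Laplace transform of `t ↦ t E_ρ(-t^ρ)`, that is `-F'` for `F s = s^(ρ-1) / (s^ρ + 1)`. -/
noncomputable def mlLaplace (ρ : ℝ) (s : ℂ) : ℂ :=
  s ^ (ρ : ℂ) * (s ^ (ρ : ℂ) - (ρ - 1)) / (s ^ 2 * (s ^ (ρ : ℂ) + 1) ^ 2)

/-- Termwise integration; the transforms of the terms form an arithmetico-geometric series with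
ratio `-s^(-ρ)`, summed in closed form. -/
lemma laplace_ml {ρ : ℝ} (hρ : 0 < ρ) (s : ℂ) (hs : s.re = 2) :
    ∫ t in Ioi (0 : ℝ), ((t * mittagLeffler ρ (-(t ^ ρ)) : ℝ) : ℂ) * cexp (-(s * t))
      = mlLaplace ρ s := by
  have hs0 : s ≠ 0 := by rintro rfl; simp at hs
  have hre : 0 < s.re := by rw [hs]; norm_num
  have hns : 1 < ‖s‖ := by
    have := Complex.re_le_norm s
    linarith
  set a : ℕ → ℝ := fun k => (-1) ^ k / Real.Gamma (ρ * k + 1) with ha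
  set T : ℕ → ℝ → ℂ := fun k t => (a k : ℂ) * (((t ^ (ρ * k + 1) : ℝ) : ℂ) * cexp (-(s * t)))
    with hT
  have hpos : ∀ k : ℕ, 0 ≤ ρ * k + 1 := fun k => by positivity
  have hG : ∀ k : ℕ, 0 < Real.Gamma (ρ * k + 1) := fun k =>
    Real.Gamma_pos_of_pos (by positivity)
  have hG2 : ∀ k : ℕ, Real.Gamma (ρ * k + 1 + 1) = (ρ * k + 1) * Real.Gamma (ρ * k + 1) :=
    fun k => Real.Gamma_add_one (by positivity)
  have hTint : ∀ k, Integrable (T k) (volume.restrict (Ioi 0)) := fun k =>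
    (integrableOn_rpow_mul_cexp _ (hpos k) s hre).const_mul _
  have hnorm : ∀ k, ∫ t in Ioi (0 : ℝ), ‖T k t‖
      = (1 / 4) * (ρ * (k * (((2 : ℝ) ^ ρ)⁻¹) ^ k) + (((2 : ℝ) ^ ρ)⁻¹) ^ k) := by
    intro k
    have h1 : ∫ t in Ioi (0 : ℝ), ‖T k t‖ = ∫ t in Ioi (0 : ℝ), |a k| *
        (t ^ (ρ * k + 1 + 1 - 1) * Real.exp (-(2 * t))) := by
      refine setIntegral_congr_fun measurableSet_Ioi fun t ht => ?_
      simp only [hT]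
      rw [norm_mul, norm_rpow_mul_cexp _ _ ht, hs, Complex.norm_real, add_sub_cancel_right]
      rfl
    rw [h1, integral_const_mul, Real.integral_rpow_mul_exp_neg_mul_Ioi (by positivity) two_pos,
      hG2]
    have h2 : |a k| = (Real.Gamma (ρ * k + 1))⁻¹ := by
      rw [ha]; simp [abs_div, abs_of_pos (hG k)]
    have h3 : (1 / 2 : ℝ) ^ (ρ * k + 1 + 1) = (((2 : ℝ) ^ ρ)⁻¹) ^ k * (1 / 4) := by
      rw [one_div, Real.inv_rpow (by norm_num), Real.rpow_add_one (by norm_num),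
        Real.rpow_add_one (by norm_num), Real.rpow_mul (by norm_num), Real.rpow_natCast, inv_pow]
      rw [mul_assoc, mul_inv]; norm_num
    rw [h2, h3]
    have := (hG k).ne'
    field_simp
  have hq0 : (0 : ℝ) ≤ ((2 : ℝ) ^ ρ)⁻¹ := by positivity
  have hq1 := inv_rpow_lt_one hρ (σ := 2) (by norm_num)
  have hsum : Summable fun k => ∫ t in Ioi (0 : ℝ), ‖T k t‖ := by
    simp_rw [hnorm]
    refine Summable.mul_left _ (Summable.add (Summable.mul_left _ ?_)
      (summable_geom_inv hρ (by norm_num)))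
    exact (hasSum_coe_mul_geometric_of_norm_lt_one
      (by rwa [Real.norm_of_nonneg hq0])).summable
  have key := hasSum_integral_of_summable_integral_norm hTint hsum
  have hL : ∫ t in Ioi (0 : ℝ), ((t * mittagLeffler ρ (-(t ^ ρ)) : ℝ) : ℂ) * cexp (-(s * t))
      = ∫ t in Ioi (0 : ℝ), ∑' k, T k t := by
    refine setIntegral_congr_fun measurableSet_Ioi fun t ht => ?_
    have ht' : 0 < t := ht
    simp only [hT]
    simp_rw [← mul_assoc]
    rw [tsum_mul_right, mittagLeffler, ← tsum_mul_left, Complex.ofReal_tsum]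
    congr 2
    ext k
    rw [← Complex.ofReal_mul, ha]
    congr 1
    rw [Real.rpow_add_one ht'.ne', Real.rpow_mul ht'.le, Real.rpow_natCast, neg_pow]
    ring
  rw [hL]
  set w : ℂ := -(s ^ (ρ : ℂ))⁻¹ with hw
  have hwn : ‖w‖ < 1 := by
    rw [hw, norm_neg, norm_inv, Complex.norm_cpow_real]
    exact inv_rpow_lt_one hρ hns
  have hz : s ^ (ρ : ℂ) ≠ 0 := by simp [Complex.cpow_eq_zero_iff, hs0]
  have hval : ∀ k, ∫ t in Ioi (0 : ℝ), T k t = (s ^ 2)⁻¹ * (ρ * (k * w ^ k) + w ^ k) := by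
    intro k
    simp only [hT]
    rw [integral_const_mul, laplace_rpow _ (hpos k) s hre, hG2]
    have h3 : s ^ (-(((ρ * k + 1 : ℝ) : ℂ) + 1)) = (s ^ 2)⁻¹ * ((s ^ (ρ : ℂ))⁻¹) ^ k := by
      rw [Complex.cpow_neg, show (((ρ * k + 1 : ℝ) : ℂ) + 1) = ρ * k + (2 : ℕ) by
        push_cast; ring, Complex.cpow_add _ _ hs0, Complex.cpow_natCast, mul_inv, mul_comm,
        Complex.cpow_mul_nat, inv_pow]
    have h4 : ((Real.Gamma (ρ * k + 1) : ℝ) : ℂ) ≠ 0 := by exact_mod_cast (hG k).ne'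
    rw [h3, hw, neg_pow (s ^ (ρ : ℂ))⁻¹, ha]
    push_cast
    field_simp
  have h1w : 1 - w ≠ 0 := by
    intro h
    rw [← sub_eq_zero.1 h] at hwn
    simp at hwn
  simp_rw [hval] at key
  have key2 : HasSum (fun k : ℕ => (s ^ 2)⁻¹ * (ρ * (k * w ^ k) + w ^ k))
      ((s ^ 2)⁻¹ * (ρ * (w / (1 - w) ^ 2) + (1 - w)⁻¹)) :=
    (((hasSum_coe_mul_geometric_of_norm_lt_one hwn).mul_left _).add
      (hasSum_geometric_of_norm_lt_one hwn)).mul_left _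
  rw [key.unique key2, mlLaplace]
  have e : 1 - w = (s ^ (ρ : ℂ) + 1) / s ^ (ρ : ℂ) := by
    rw [hw]; field_simp; ring
  have hz1 : s ^ (ρ : ℂ) + 1 ≠ 0 := by
    intro h
    rw [e, h, zero_div] at h1w
    exact h1w rfl
  rw [e, hw]
  field_simp
  ring

/-! ### Bounds on vertical lines and contour shift -/

/-- A constant for the sector `|arg z| ≤ ρπ/2`: there `|z + 1|² ≥ sectorConst ρ * (1 + |z|)²`.
It is positive for `1 < ρ < 2`. -/
noncomputable def sectorConst (ρ : ℝ) : ℝ := (1 + Real.cos (ρ * (Real.pi / 2))) / 2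

lemma sectorConst_pos {ρ : ℝ} (hρ₁ : 1 < ρ) (hρ₂ : ρ < 2) : 0 < sectorConst ρ := by
  have h := Real.cos_lt_cos_of_nonneg_of_le_pi (x := ρ * (Real.pi / 2)) (y := Real.pi)
    (by have := Real.pi_pos; positivity) le_rfl (by nlinarith [Real.pi_pos])
  rw [Real.cos_pi] at h
  unfold sectorConst
  linarith

/-- For `Re s > 0` the power `s ^ ρ` stays in a sector that avoids `-1`. -/
lemma sectorConst_mul_le {ρ : ℝ} (hρ₁ : 1 < ρ) (hρ₂ : ρ < 2) {s : ℂ} (hs : 0 < s.re) :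
    sectorConst ρ * (1 + ‖s‖ ^ ρ) ^ 2 ≤ ‖s ^ (ρ : ℂ) + 1‖ ^ 2 := by
  have hn : ‖s ^ (ρ : ℂ)‖ = ‖s‖ ^ ρ := Complex.norm_cpow_real s ρ
  have hre : (s ^ (ρ : ℂ)).re = ‖s‖ ^ ρ * Real.cos (arg s * ρ) := Complex.cpow_ofReal_re s ρ
  have hcos : Real.cos (ρ * (Real.pi / 2)) ≤ Real.cos (arg s * ρ) := by
    rw [← Real.cos_abs (arg s * ρ), abs_mul, abs_of_pos (by linarith : 0 < ρ)]
    have := Complex.abs_arg_le_pi_div_two_iff.2 hs.le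
    refine Real.cos_le_cos_of_nonneg_of_le_pi (by positivity) (by nlinarith [Real.pi_pos]) ?_
    rw [mul_comm]
    gcongr
  have hR : 0 ≤ ‖s‖ ^ ρ := by positivity
  have hsq : ‖s ^ (ρ : ℂ) + 1‖ ^ 2 = (‖s‖ ^ ρ) ^ 2 + 2 * (‖s‖ ^ ρ * Real.cos (arg s * ρ)) + 1 := by
    rw [← hre, ← hn, ← Complex.normSq_eq_norm_sq, ← Complex.normSq_eq_norm_sq,
      Complex.normSq_apply, Complex.normSq_apply]
    simp
    ring
  rw [hsq, sectorConst]
  have := mul_le_mul_of_nonneg_left hcos hR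
  have h1 := Real.cos_le_one (ρ * (Real.pi / 2))
  nlinarith [mul_nonneg (sub_nonneg.2 h1) (sq_nonneg (1 - ‖s‖ ^ ρ))]

lemma cpow_add_one_ne_zero {ρ : ℝ} (hρ₁ : 1 < ρ) (hρ₂ : ρ < 2) {s : ℂ} (hs : 0 < s.re) :
    s ^ (ρ : ℂ) + 1 ≠ 0 := by
  intro h
  have h1 := sectorConst_mul_le hρ₁ hρ₂ hs
  have h2 := sectorConst_pos hρ₁ hρ₂
  rw [h, norm_zero] at h1
  have : 0 < sectorConst ρ * (1 + ‖s‖ ^ ρ) ^ 2 := by positivity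
  norm_num at h1
  linarith

lemma differentiableOn_mlLaplace {ρ : ℝ} (hρ₁ : 1 < ρ) (hρ₂ : ρ < 2) :
    DifferentiableOn ℂ (mlLaplace ρ) {s : ℂ | 0 < s.re} := by
  intro s hs
  have hs' : 0 < s.re := hs
  have hp : DifferentiableAt ℂ (fun z : ℂ => z ^ (ρ : ℂ)) s :=
    differentiableAt_id.cpow_const (Or.inl hs')
  have hs0 : s ≠ 0 := by rintro rfl; simp at hs'
  have hne := cpow_add_one_ne_zero hρ₁ hρ₂ hs'
  refine DifferentiableAt.differentiableWithinAt ?_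
  exact (hp.mul (hp.sub_const _)).div ((differentiableAt_id.pow 2).mul ((hp.add_const _).pow 2))
    (mul_ne_zero (pow_ne_zero _ hs0) (pow_ne_zero _ hne))

/-- An integrable majorant of `mlLaplace ρ` along every vertical line in the open right
half-plane. Integrability at the origin is where `1 < ρ` enters. At `ω = 0` the value is the junk
value `0` of `rpow`, so the majorant is only claimed for `ω ≠ 0`. -/
noncomputable def lineBound (ρ ω : ℝ) : ℝ := min (|ω| ^ (ρ - 2)) (|ω| ^ (-2 : ℝ))

lemma lineBound_nonneg (ρ ω : ℝ) : 0 ≤ lineBound ρ ω :=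
  le_min (by positivity) (by positivity)

lemma lineBound_neg (ρ ω : ℝ) : lineBound ρ (-ω) = lineBound ρ ω := by simp [lineBound]

lemma norm_mlLaplace_le {ρ : ℝ} (hρ₁ : 1 < ρ) (hρ₂ : ρ < 2) {s : ℂ} (hs : 0 < s.re)
    (him : s.im ≠ 0) : ‖mlLaplace ρ s‖ ≤ (sectorConst ρ)⁻¹ * lineBound ρ s.im := by
  have hs0 : s ≠ 0 := by rintro rfl; simp at hs
  have hn0 : 0 < ‖s‖ := norm_pos_iff.2 hs0
  have hi0 : 0 < |s.im| := abs_pos.2 him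
  have hin : |s.im| ≤ ‖s‖ := Complex.abs_im_le_norm s
  have hc := sectorConst_pos hρ₁ hρ₂
  set R := ‖s‖ ^ ρ with hR
  have hR0 : 0 < R := by positivity
  have hn : ‖s ^ (ρ : ℂ)‖ = R := Complex.norm_cpow_real s ρ
  have h1 : ‖s ^ (ρ : ℂ) - (ρ - 1)‖ ≤ 1 + R := by
    refine (norm_sub_le _ _).trans ?_
    have : ‖((ρ : ℂ) - 1)‖ = ρ - 1 := by
      rw [show ((ρ : ℂ) - 1) = ((ρ - 1 : ℝ) : ℂ) by push_cast; ring, Complex.norm_real,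
        Real.norm_of_nonneg (by linarith)]
    rw [hn, this]
    linarith
  have h2 := sectorConst_mul_le hρ₁ hρ₂ hs
  have h3 : ‖mlLaplace ρ s‖ ≤ (sectorConst ρ)⁻¹ * (R / (‖s‖ ^ 2 * (1 + R))) := by
    rw [mlLaplace, norm_div, norm_mul, norm_mul, norm_pow, norm_pow, hn]
    calc R * ‖s ^ (ρ : ℂ) - (ρ - 1)‖ / (‖s‖ ^ 2 * ‖s ^ (ρ : ℂ) + 1‖ ^ 2)
        ≤ R * (1 + R) / (‖s‖ ^ 2 * (sectorConst ρ * (1 + R) ^ 2)) := by gcongr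
      _ = _ := by field_simp
  refine h3.trans (mul_le_mul_of_nonneg_left (le_min ?_ ?_) (by positivity))
  · calc R / (‖s‖ ^ 2 * (1 + R)) ≤ R / (‖s‖ ^ 2 * 1) := by gcongr; linarith
      _ = ‖s‖ ^ (ρ - 2) := by
        rw [Real.rpow_sub hn0, mul_one, ← hR]; norm_cast
      _ ≤ |s.im| ^ (ρ - 2) := Real.rpow_le_rpow_of_nonpos hi0 hin (by linarith)
  · calc R / (‖s‖ ^ 2 * (1 + R)) ≤ (1 + R) / (‖s‖ ^ 2 * (1 + R)) := by gcongr; linarith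
      _ = ‖s‖ ^ (-2 : ℝ) := by
        rw [Real.rpow_neg hn0.le]; norm_cast; field_simp
      _ ≤ |s.im| ^ (-2 : ℝ) := Real.rpow_le_rpow_of_nonpos hi0 hin (by norm_num)

lemma integrable_lineBound {ρ : ℝ} (hρ₁ : 1 < ρ) : Integrable (lineBound ρ) := by
  have hm : Measurable (lineBound ρ) := by unfold lineBound; fun_prop
  have hI : IntegrableOn (lineBound ρ) (Ioi 0) := by
    rw [← Ioc_union_Ioi_eq_Ioi (zero_le_one' ℝ), integrableOn_union]
    constructor
    · have : IntegrableOn (fun x : ℝ => x ^ (ρ - 2)) (Ioc 0 1) :=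
        (intervalIntegrable_iff_integrableOn_Ioc_of_le zero_le_one).1
          (intervalIntegral.intervalIntegrable_rpow' (by linarith))
      refine this.mono' hm.aestronglyMeasurable ?_
      filter_upwards [ae_restrict_mem measurableSet_Ioc] with x hx
      rw [Real.norm_of_nonneg (lineBound_nonneg _ _)]
      exact (min_le_left _ _).trans_eq (by rw [abs_of_pos hx.1])
    · refine (integrableOn_Ioi_rpow_of_lt (a := -2) (by norm_num) one_pos).mono'
        hm.aestronglyMeasurable ?_
      filter_upwards [ae_restrict_mem measurableSet_Ioi] with x hx
      have hx' : 1 < x := hx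
      rw [Real.norm_of_nonneg (lineBound_nonneg _ _)]
      exact (min_le_right _ _).trans_eq (by rw [abs_of_pos (by linarith)])
  have hJ : IntegrableOn (lineBound ρ) (Iio 0) := by
    have := hI.comp_neg
    simpa [lineBound_neg] using this
  rw [← integrableOn_univ, ← Iic_union_Ioi (a := (0 : ℝ)), integrableOn_union]
  exact ⟨(integrableOn_Iic_iff_integrableOn_Iio (by finiteness)).2 hJ, hI⟩

lemma tendsto_lineBound (ρ : ℝ) : Tendsto (lineBound ρ) atTop (𝓝 0) := by
  refine squeeze_zero' (Eventually.of_forall (lineBound_nonneg ρ)) ?_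
    (tendsto_rpow_neg_atTop (y := 2) (by norm_num))
  filter_upwards [eventually_gt_atTop 0] with x hx
  exact (min_le_right _ _).trans_eq (by rw [abs_of_pos hx])

/-- Integrability along a vertical line of a function with an integrable majorant. -/
lemma integrable_vertical {G : ℂ → ℂ} (hG : DifferentiableOn ℂ G {s | 0 < s.re}) {b : ℝ → ℝ}
    (hb : Integrable b) {x : ℝ} (hx : 0 < x)
    (hbd : ∀ y : ℝ, y ≠ 0 → ‖G (x + y * I)‖ ≤ b y) :
    Integrable fun y : ℝ => G (x + y * I) := by
  refine hb.mono' (Continuous.aestronglyMeasurable ?_) ?_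
  · exact hG.continuousOn.comp_continuous (by fun_prop) (by simp [hx])
  · filter_upwards [compl_mem_ae_iff.2 (measure_singleton (0 : ℝ))] with y hy
    exact hbd y hy

/-- Cauchy's theorem on tall rectangles: the integral over a vertical line does not depend on
the line. -/
lemma integral_vertical_eq {G : ℂ → ℂ} (hG : DifferentiableOn ℂ G {s | 0 < s.re}) {b : ℝ → ℝ}
    (hb : Integrable b) (hb0 : Tendsto b atTop (𝓝 0)) (hbe : ∀ y, b (-y) = b y)
    {x₁ x₂ : ℝ} (hx₁ : 0 < x₁) (hx : x₁ ≤ x₂)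
    (hbd : ∀ x y : ℝ, 0 < x → x ≤ x₂ → y ≠ 0 → ‖G (x + y * I)‖ ≤ b y) :
    ∫ y : ℝ, G (x₁ + y * I) = ∫ y : ℝ, G (x₂ + y * I) := by
  have hx₂ : 0 < x₂ := hx₁.trans_le hx
  have hlim : ∀ x : ℝ, 0 < x → x ≤ x₂ → Tendsto (fun T : ℝ => ∫ y in (-T)..T, G (x + y * I))
      atTop (𝓝 (∫ y : ℝ, G (x + y * I))) := fun x h h' =>
    intervalIntegral_tendsto_integral (integrable_vertical hG hb h fun y hy => hbd x y h h' hy)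
      tendsto_neg_atTop_atBot tendsto_id
  -- `ε = ±1` selects the top or the bottom edge of the rectangle.
  have hedge : ∀ ε : ℝ, (ε = 1 ∨ ε = -1) →
      Tendsto (fun T : ℝ => ∫ x in x₁..x₂, G (x + ((ε * T : ℝ) : ℂ) * I)) atTop (𝓝 0) := by
    intro ε hε
    have h0 : Tendsto (fun T : ℝ => b T * |x₂ - x₁|) atTop (𝓝 0) := by
      simpa using hb0.mul_const _
    refine squeeze_zero_norm' ?_ h0
    filter_upwards [eventually_gt_atTop 0] with T hT
    refine intervalIntegral.norm_integral_le_of_norm_le_const fun x hx' => ?_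
    rw [uIoc_of_le hx] at hx'
    have hbT : b (ε * T) = b T := by rcases hε with rfl | rfl <;> simp [hbe]
    rw [← hbT]
    refine hbd x _ (hx₁.trans hx'.1) hx'.2 ?_
    rcases hε with rfl | rfl <;> simp [hT.ne']
  have hrect : ∀ T : ℝ, (∫ y in (-T)..T, G (x₂ + y * I)) - (∫ y in (-T)..T, G (x₁ + y * I))
      = I * ((∫ x in x₁..x₂, G (x + ((-1 * T : ℝ) : ℂ) * I))
          - ∫ x in x₁..x₂, G (x + ((1 * T : ℝ) : ℂ) * I)) := by
    intro T
    have h := Complex.integral_boundary_rect_eq_zero_of_differentiableOn G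
      (x₁ + (-T : ℝ) * I) (x₂ + T * I) (hG.mono ?_)
    · simp only [add_re, ofReal_re, mul_re, I_re, mul_zero, ofReal_im, I_im, mul_one, sub_self,
        add_zero, add_im, mul_im, zero_add, smul_eq_mul] at h
      rw [neg_one_mul, one_mul]
      linear_combination (-I) * h + ((∫ y in (-T)..T, G (x₂ + y * I))
        - (∫ y in (-T)..T, G (x₁ + y * I))) * Complex.I_sq
    · intro z hz
      have hz1 := hz.1
      simp only [mem_preimage, add_re, ofReal_re, mul_re, I_re, mul_zero, ofReal_im, I_im, mul_one,
        sub_self, add_zero] at hz1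
      rw [uIcc_of_le hx] at hz1
      exact hx₁.trans_le hz1.1
  have hd := (hlim x₂ hx₂ le_rfl).sub (hlim x₁ hx₁ hx)
  simp_rw [hrect] at hd
  have hd0 := ((hedge (-1) (Or.inr rfl)).sub (hedge 1 (Or.inl rfl))).const_mul I
  rw [sub_zero, mul_zero] at hd0
  exact (sub_eq_zero.1 (tendsto_nhds_unique hd hd0)).symm

/-! ### Inversion and decay -/

lemma norm_cexp_line (x y t : ℝ) : ‖cexp ((x + y * I) * t)‖ = Real.exp (x * t) := by
  rw [Complex.norm_exp]; simp

/-- The inversion formula for the Laplace transform on `Re s = 2`. -/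
lemma inversion_two {ρ : ℝ} (hρ₁ : 1 < ρ) (hρ₂ : ρ < 2) {t : ℝ} (ht : 0 < t) :
    ((t * mittagLeffler ρ (-(t ^ ρ)) : ℝ) : ℂ) = (2 * Real.pi : ℂ)⁻¹ *
      ∫ y : ℝ, mlLaplace ρ ((2 : ℝ) + y * I) * cexp (((2 : ℝ) + y * I) * t) := by
  have hρ : 0 < ρ := by linarith
  set u : ℝ → ℂ := fun t => ((t * mittagLeffler ρ (-(t ^ ρ)) : ℝ) : ℂ) * cexp (-(2 * t)) with hu
  -- `h` is continuous at every `t > 0`, which is all that pointwise inversion needs.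
  set h : ℝ → ℂ := (Ioi (0 : ℝ)).indicator u with hh
  have hcont : ContinuousOn u (Ioi 0) := by
    refine ContinuousOn.mul (continuous_ofReal.comp_continuousOn ?_) (by fun_prop)
    exact continuousOn_id.mul (continuousOn_ml hρ)
  have hint : Integrable h := by
    rw [hh, integrable_indicator_iff measurableSet_Ioi]
    refine ((integrableOn_rpow_mul_exp 1 (1 / 2) zero_le_one (by norm_num)).const_mul
      (1 - ((3 / 2 : ℝ) ^ ρ)⁻¹)⁻¹).mono' (hcont.aestronglyMeasurable measurableSet_Ioi) ?_
    filter_upwards [ae_restrict_mem measurableSet_Ioi] with x hx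
    have hx' : 0 < x := hx
    simp only [hu]
    rw [norm_mul, Complex.norm_real, Complex.norm_exp, norm_mul, Real.norm_of_nonneg hx'.le,
      Real.rpow_one, Real.norm_eq_abs]
    have e1 : (-(2 * (x : ℂ))).re = -(2 * x) := by simp
    have e2 : Real.exp (-(1 / 2 * x)) = Real.exp (3 / 2 * x) * Real.exp (-(2 * x)) := by
      rw [← Real.exp_add]; congr 1; ring
    rw [e1, e2]
    have := mul_le_mul_of_nonneg_left (abs_ml_le hρ hx') hx'.le
    calc _ ≤ _ := mul_le_mul_of_nonneg_right this (Real.exp_pos _).le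
      _ = _ := by ring
  have hF : ∀ ξ : ℝ, FourierTransform.fourier h ξ
      = mlLaplace ρ ((2 : ℝ) + ((2 * Real.pi * ξ : ℝ) : ℂ) * I) := by
    intro ξ
    rw [Real.fourier_real_eq_integral_exp_smul,
      ← laplace_ml hρ ((2 : ℝ) + ((2 * Real.pi * ξ : ℝ) : ℂ) * I) (by simp),
      ← integral_indicator measurableSet_Ioi]
    congr 1
    ext x
    by_cases hx : x ∈ Ioi (0 : ℝ)
    · simp only [hh, indicator_of_mem hx, hu, smul_eq_mul]
      rw [mul_left_comm, ← Complex.exp_add]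
      congr 2
      push_cast
      ring
    · simp [hh, indicator_of_notMem hx]
  have hline : Integrable fun y : ℝ => mlLaplace ρ ((2 : ℝ) + y * I) := by
    refine integrable_vertical (differentiableOn_mlLaplace hρ₁ hρ₂)
      ((integrable_lineBound hρ₁).const_mul (sectorConst ρ)⁻¹) two_pos fun y hy => ?_
    simpa using norm_mlLaplace_le hρ₁ hρ₂ (s := (2 : ℝ) + y * I) (by simp) (by simpa using hy)
  have hFint : Integrable (FourierTransform.fourier h) := by
    rw [show FourierTransform.fourier h = _ from funext hF]
    exact hline.comp_mul_left' (by positivity : 2 * Real.pi ≠ 0)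
  have hca : ContinuousAt h t := by
    refine ((hcont.continuousAt (Ioi_mem_nhds ht)).congr ?_)
    filter_upwards [Ioi_mem_nhds ht] with x hx
    exact (indicator_of_mem hx u).symm
  have hinv := hint.fourierInv_fourier_eq hFint hca
  have hht : h t = u t := indicator_of_mem (s := Ioi (0 : ℝ)) ht u
  rw [hht, Real.fourierInv_eq'] at hinv
  have hsub := Measure.integral_comp_mul_left
    (fun y : ℝ => mlLaplace ρ ((2 : ℝ) + y * I) * cexp (((2 : ℝ) + y * I) * t)) (2 * Real.pi)
  have e3 : ∫ v : ℝ, cexp (((2 * Real.pi * inner ℝ v t : ℝ) : ℂ) * I) •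
        FourierTransform.fourier h v
      = cexp (-(2 * t)) * ∫ v : ℝ, (fun y : ℝ => mlLaplace ρ ((2 : ℝ) + y * I) *
        cexp (((2 : ℝ) + y * I) * t)) (2 * Real.pi * v) := by
    rw [← integral_const_mul]
    congr 1
    ext v
    rw [hF, smul_eq_mul, mul_comm, mul_left_comm, ← Complex.exp_add]
    congr 2
    simp
    ring
  rw [e3, hsub, abs_of_pos (by positivity), Complex.real_smul, hu, mul_comm] at hinv
  have := mul_right_cancel₀ (Complex.exp_ne_zero _) hinv
  rw [← this]
  push_cast
  rfl

/-- After the contour is moved to `Re s = σ` and `σ → 0`, the inversion formula bounds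
`t E_ρ(-t^ρ)` uniformly. -/
lemma abs_mul_ml_le {ρ : ℝ} (hρ₁ : 1 < ρ) (hρ₂ : ρ < 2) {t : ℝ} (ht : 0 < t) :
    |t * mittagLeffler ρ (-(t ^ ρ))| ≤
      (2 * Real.pi)⁻¹ * ((sectorConst ρ)⁻¹ * ∫ y, lineBound ρ y) := by
  have hc := sectorConst_pos hρ₁ hρ₂
  set G : ℂ → ℂ := fun s => mlLaplace ρ s * cexp (s * t) with hGdef
  have hG : DifferentiableOn ℂ G {s | 0 < s.re} :=
    (differentiableOn_mlLaplace hρ₁ hρ₂).mul (by fun_prop)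
  have hbd : ∀ x y : ℝ, 0 < x → y ≠ 0 → ‖G (x + y * I)‖ ≤
      Real.exp (x * t) * ((sectorConst ρ)⁻¹ * lineBound ρ y) := by
    intro x y hx hy
    simp only [hGdef]
    rw [norm_mul, norm_cexp_line, mul_comm]
    gcongr
    simpa using norm_mlLaplace_le hρ₁ hρ₂ (s := x + y * I) (by simpa using hx) (by simpa using hy)
  have hint := (integrable_lineBound hρ₁).const_mul (sectorConst ρ)⁻¹
  have hσ : ∀ σ : ℝ, 0 < σ → σ ≤ 2 → |t * mittagLeffler ρ (-(t ^ ρ))| ≤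
      (2 * Real.pi)⁻¹ * (Real.exp (σ * t) * ((sectorConst ρ)⁻¹ * ∫ y, lineBound ρ y)) := by
    intro σ h0 h2
    have hshift := integral_vertical_eq hG (hint.const_mul (Real.exp (2 * t)))
      (by simpa using ((tendsto_lineBound ρ).const_mul (sectorConst ρ)⁻¹).const_mul _)
      (fun y => by rw [lineBound_neg]) h0 h2 (fun x y hx hx2 hy => by
        refine (hbd x y hx hy).trans ?_
        have := lineBound_nonneg ρ y
        gcongr)
    have hn : |t * mittagLeffler ρ (-(t ^ ρ))|
        = (2 * Real.pi)⁻¹ * ‖∫ y : ℝ, G (σ + y * I)‖ := by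
      rw [hshift, ← Real.norm_eq_abs, ← Complex.norm_real, inversion_two hρ₁ hρ₂ ht, norm_mul,
        norm_inv]
      congr 2
      rw [norm_mul, Complex.norm_real, Real.norm_of_nonneg Real.pi_pos.le]
      simp
    rw [hn]
    gcongr
    rw [← integral_const_mul, ← integral_const_mul]
    refine norm_integral_le_of_norm_le (hint.const_mul _) ?_
    filter_upwards [compl_mem_ae_iff.2 (measure_singleton (0 : ℝ))] with y hy
    exact hbd σ y h0 hy
  have hlim : Tendsto (fun σ : ℝ => (2 * Real.pi)⁻¹ * (Real.exp (σ * t) *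
      ((sectorConst ρ)⁻¹ * ∫ y, lineBound ρ y))) (𝓝[>] 0)
      (𝓝 ((2 * Real.pi)⁻¹ * ((sectorConst ρ)⁻¹ * ∫ y, lineBound ρ y))) := by
    refine tendsto_nhdsWithin_of_tendsto_nhds ?_
    refine Continuous.tendsto' (by fun_prop) _ _ (by simp)
  refine ge_of_tendsto hlim ?_
  filter_upwards [Ioo_mem_nhdsGT (zero_lt_two' ℝ)] with σ h
  exact hσ σ h.1 h.2.le

/-! ### Square integrability -/

/-- `f` is bounded on `(0, 1]` by the a priori bound and is `O(1/t)` on `(1, ∞)`. -/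
lemma integrableOn_ml_sq {ρ : ℝ} (hρ₁ : 1 < ρ) (hρ₂ : ρ < 2) :
    IntegrableOn (fun t : ℝ => mittagLeffler ρ (-(t ^ ρ)) ^ 2) (Ioi 0) := by
  have hρ : 0 < ρ := by linarith
  set B := (2 * Real.pi)⁻¹ * ((sectorConst ρ)⁻¹ * ∫ y, lineBound ρ y)
  set A := (1 - ((3 / 2 : ℝ) ^ ρ)⁻¹)⁻¹
  have hm : ∀ s ⊆ Ioi (0 : ℝ), MeasurableSet s → AEStronglyMeasurable
      (fun t : ℝ => mittagLeffler ρ (-(t ^ ρ)) ^ 2) (volume.restrict s) := fun s hs hs' =>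
    (((continuousOn_ml hρ).pow 2).mono hs).aestronglyMeasurable hs'
  rw [← Ioc_union_Ioi_eq_Ioi (zero_le_one' ℝ), integrableOn_union]
  constructor
  · refine (integrableOn_const (C := (A * Real.exp (3 / 2)) ^ 2) (by simp)).mono'
      (hm _ (fun x hx => hx.1) measurableSet_Ioc) ?_
    filter_upwards [ae_restrict_mem measurableSet_Ioc] with t ht
    have hA : 0 ≤ A := inv_nonneg.2 (sub_nonneg.2 (inv_rpow_lt_one hρ (by norm_num)).le)
    rw [norm_pow, Real.norm_eq_abs]
    have h1 := abs_ml_le hρ ht.1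
    have h2 : Real.exp (3 / 2 * t) ≤ Real.exp (3 / 2) := Real.exp_le_exp.2 (by linarith [ht.2])
    gcongr
    exact h1.trans (mul_le_mul_of_nonneg_left h2 hA)
  · refine ((integrableOn_Ioi_rpow_of_lt (a := -2) (by norm_num) one_pos).const_mul (B ^ 2)).mono'
      (hm _ (Ioi_subset_Ioi zero_le_one) measurableSet_Ioi) ?_
    filter_upwards [ae_restrict_mem measurableSet_Ioi] with t ht
    have ht0 : 0 < t := lt_trans one_pos ht
    have h1 := abs_mul_ml_le hρ₁ hρ₂ ht0
    rw [abs_mul, abs_of_pos ht0] at h1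
    have h2 : (t * |mittagLeffler ρ (-(t ^ ρ))|) ^ 2 ≤ B ^ 2 := by gcongr
    rw [norm_pow, Real.norm_eq_abs, Real.rpow_neg ht0.le, ← div_eq_mul_inv,
      le_div_iff₀ (by positivity), Real.rpow_two, mul_comm, ← mul_pow]
    exact h2

end

/-- For `1 < ρ < 2` there is a constant `c > 0`, depending only on `ρ`, such that
for every `α > 0`, `∫_0^∞ E_ρ(−α t^ρ)² dt ≤ c α^{−1/ρ}`; in particular
`t ↦ E_ρ(−α t^ρ)` belongs to `L²(0,∞)`. -/
theorem resolvent_L2_bound (ρ : ℝ) (hρ₁ : 1 < ρ) (hρ₂ : ρ < 2) :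
    ∃ c : ℝ, 0 < c ∧ ∀ α : ℝ, 0 < α →
      IntegrableOn (fun t : ℝ => (mittagLeffler ρ (-(α * t ^ ρ))) ^ 2) (Set.Ioi 0) ∧
      ∫ t in Set.Ioi (0 : ℝ), (mittagLeffler ρ (-(α * t ^ ρ))) ^ 2
        ≤ c * α ^ (-(1 / ρ)) := by
  have hρ : 0 < ρ := by linarith
  have hint := integrableOn_ml_sq hρ₁ hρ₂
  have h0 : 0 ≤ ∫ t in Set.Ioi (0 : ℝ), mittagLeffler ρ (-(t ^ ρ)) ^ 2 :=
    integral_nonneg fun t => sq_nonneg _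
  refine ⟨(∫ t in Set.Ioi (0 : ℝ), mittagLeffler ρ (-(t ^ ρ)) ^ 2) + 1, by linarith,
    fun α hα => ?_⟩
  -- Both claims follow from `α = 1` by the substitution `t ↦ α^(1/ρ) t`.
  have hr : 0 < α ^ (1 / ρ) := by positivity
  have hscale : Set.EqOn (fun t : ℝ => mittagLeffler ρ (-((α ^ (1 / ρ) * t) ^ ρ)) ^ 2)
      (fun t : ℝ => mittagLeffler ρ (-(α * t ^ ρ)) ^ 2) (Set.Ioi 0) := by
    intro t ht
    have ht' : 0 < t := ht
    simp only
    rw [Real.mul_rpow hr.le ht'.le, ← Real.rpow_mul hα.le, one_div_mul_cancel hρ.ne',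
      Real.rpow_one]
  constructor
  · refine IntegrableOn.congr_fun ?_ hscale measurableSet_Ioi
    refine (integrableOn_Ioi_comp_mul_left_iff
      (fun t : ℝ => mittagLeffler ρ (-(t ^ ρ)) ^ 2) 0 hr).2 ?_
    rwa [mul_zero]
  · rw [← setIntegral_congr_fun measurableSet_Ioi hscale,
      integral_comp_mul_left_Ioi (fun t : ℝ => mittagLeffler ρ (-(t ^ ρ)) ^ 2) 0 hr, mul_zero,
      smul_eq_mul, Real.rpow_neg hα.le, mul_comm]
    gcongr
    linarith
end

section
/- Let 1 < ρ < 2, μ > 0 with μ ≠ 1. There exists a constant C > 0 such that for all x ≥ 1, |G_ρ(−x)| ≤ C · (x^{−1} + x^{−μ}), where G_ρ is the generalized Mittag-Leffler function with parameter μ. -/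
/-!
The Euler integral for `(μ)_k` gives
`G_ρ (-x) = Γ(μ)⁻¹ ∫₀^∞ e^{-t} t^{μ-1} E_ρ (-x t) dt`, where `E_ρ` is the Mittag-Leffler function
(`genML_eq_integral`), so everything rests on the decay `|E_ρ (-y)| ≤ M / (1 + y)` for `1 < ρ < 2`
(`mittag_le`). Given that, `1 / (1 + x t) ≤ 1 / (x t)` gives `x⁻¹` when `μ > 1`, and the scaling
`s = x t` gives `x^{-μ}` when `μ < 1`; at `μ = 1` neither integral converges.

The decay comes from the contour integral
`2πi E_ρ (-y) = ∫ e^ζ ζ^{ρ-1} / (ζ^ρ + y) dζ` over a Hankel contour made of two rays at angles `± θ`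
and an arc. Since `ρ < 2`, one can choose `π / 2 < θ < π / ρ`: the factor `e^ζ` decays on the rays,
and `ζ^ρ` never meets the negative axis in the sector, so no pole is crossed when the arc shrinks
to `0`, and `|ζ^ρ + y| ≥ y sin (ρ θ)` on the rays (`mittag_decay`).

To obtain the contour integral, the integrand is expanded geometrically on a contour with a large
arc and integrated termwise by Hankel's formula for `1 / Γ` (`hankel`). That formula is proved for
`0 < z < 1` by rotating the rays onto the negative axis and applying the reflection formula, at
`z = 1` by continuity, and for larger `z` by integration by parts.

All contours are written in the coordinate `w = log ζ`, where sectors become horizontal strips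
and Cauchy's theorem for rectangles applies.
-/

/-- The generalized Mittag-Leffler function
`G_ρ(x) = ∑ (μ)_k / Γ(ρk + 1) · x^k` with `(μ)_k = Γ(μ + k)/Γ(μ)`. -/
noncomputable def genML (ρ μ x : ℝ) : ℝ :=
  ∑' k : ℕ, (Real.Gamma (μ + k) / Real.Gamma μ) / Real.Gamma (ρ * k + 1) * x ^ k

namespace GenML

open Real Set Filter Topology MeasureTheory

/-! ### Contour integrals over strips -/

/-- The contour integral of `f` along the boundary of the half-strip
`a ≤ Re w`, `η₁ ≤ Im w ≤ η₂`, entering along the lower side and leaving along the upper one. -/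
noncomputable def halfStrip (η₁ η₂ a : ℝ) (f : ℂ → ℂ) : ℂ :=
  (∫ u in Ioi a, f (u + η₂ * Complex.I)) - (∫ u in Ioi a, f (u + η₁ * Complex.I))
    + Complex.I * ∫ v in η₁..η₂, f (a + v * Complex.I)

/-- Cauchy's theorem: the half-strip can be pushed to `Re w = -∞`. In the coordinate `ζ = exp w`,
the arc of radius `exp a` shrinks to the origin. -/
theorem line_eq_halfStrip {η₁ η₂ a : ℝ} {f : ℂ → ℂ} (hη : η₁ ≤ η₂)
    (hf : ∀ w : ℂ, w.im ∈ Icc η₁ η₂ → DifferentiableAt ℂ f w)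
    (h1 : Integrable fun u : ℝ => f (u + η₁ * Complex.I))
    (h2 : Integrable fun u : ℝ => f (u + η₂ * Complex.I))
    (h0 : Tendsto (fun b : ℝ => ∫ v in η₁..η₂, f (b + v * Complex.I)) atBot (𝓝 0)) :
    (∫ u : ℝ, f (u + η₂ * Complex.I)) - (∫ u : ℝ, f (u + η₁ * Complex.I))
      = halfStrip η₁ η₂ a f := by
  have key : ∀ b : ℝ, (∫ u in b..a, f (u + η₂ * Complex.I)) - (∫ u in b..a, f (u + η₁ * Complex.I))
      = Complex.I * (∫ v in η₁..η₂, f (a + v * Complex.I))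
        - Complex.I * ∫ v in η₁..η₂, f (b + v * Complex.I) := by
    intro b
    have := Complex.integral_boundary_rect_eq_zero_of_differentiableOn f
      (⟨b, η₁⟩ : ℂ) (⟨a, η₂⟩ : ℂ) (by
        intro w hw
        refine (hf w ?_).differentiableWithinAt
        have := hw.2
        rwa [mem_preimage, uIcc_of_le hη] at this)
    simp only [smul_eq_mul] at this
    linear_combination -this
  have t1 := (intervalIntegral_tendsto_integral_Iic a (h2.integrableOn (s := Iic a)) tendsto_id).sub
    (intervalIntegral_tendsto_integral_Iic a (h1.integrableOn (s := Iic a)) tendsto_id)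
  have t2 := (tendsto_const_nhds (x := Complex.I * (∫ v in η₁..η₂, f (a + v * Complex.I)))).sub
    (h0.const_mul Complex.I)
  have e := tendsto_nhds_unique t1 (t2.congr fun b => (key b).symm)
  rw [← intervalIntegral.integral_Iic_add_Ioi (h1.integrableOn (s := Iic a)) h1.integrableOn,
    ← intervalIntegral.integral_Iic_add_Ioi (h2.integrableOn (s := Iic a)) h2.integrableOn, halfStrip]
  linear_combination e

theorem tendsto_vertical {η₁ η₂ : ℝ} {f : ℂ → ℂ} {l : Filter ℝ} {g : ℝ → ℝ}
    (hη : η₁ ≤ η₂) (hg : Tendsto g l (𝓝 0))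
    (hb : ∀ᶠ b : ℝ in l, ∀ v ∈ Icc η₁ η₂, ‖f (b + v * Complex.I)‖ ≤ g b) :
    Tendsto (fun b : ℝ => ∫ v in η₁..η₂, f (b + v * Complex.I)) l (𝓝 0) := by
  refine squeeze_zero_norm' (a := fun b => g b * |η₂ - η₁|) ?_ (by simpa using hg.mul_const _)
  filter_upwards [hb] with b hb
  refine intervalIntegral.norm_integral_le_of_norm_le_const fun v hv => hb v ?_
  rw [uIoc_of_le hη] at hv
  exact ⟨hv.1.le, hv.2⟩

/-- The integrand `exp ζ · ζ ^ (s - 1) dζ` of Hankel's formula in the coordinate `ζ = exp w`. -/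
noncomputable def ker (s : ℝ) (w : ℂ) : ℂ := Complex.exp (Complex.exp w) * Complex.exp (s * w)

theorem differentiable_ker (s : ℝ) : Differentiable ℂ (ker s) := by
  unfold ker; fun_prop

theorem norm_ker (s u v : ℝ) :
    ‖ker s (u + v * Complex.I)‖ = exp (exp u * cos v) * exp (s * u) := by
  simp [ker, Complex.norm_exp, Complex.exp_re]

/-- Faster than exponential decay along the rays of the contour. -/
theorem exp_exp_le {c : ℝ} (hc : 0 < c) (s : ℝ) :
    ∃ C : ℝ, 0 < C ∧ ∀ u : ℝ, 0 ≤ u → exp (exp u * -c) * exp (s * u) ≤ C * exp (-u) := by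
  obtain ⟨n, hn⟩ := exists_nat_ge (s + 1)
  refine ⟨n.factorial / c ^ n, by positivity, fun u h => ?_⟩
  have h1 := pow_div_factorial_le_exp (exp u * c) (by positivity) n
  have h2 : exp (exp u * -c) ≤ n.factorial / (exp u * c) ^ n := by
    rw [mul_neg, exp_neg, ← inv_div]
    exact inv_anti₀ (by positivity) h1
  calc exp (exp u * -c) * exp (s * u) ≤ n.factorial / (exp u * c) ^ n * exp (s * u) := by gcongr
    _ = n.factorial / c ^ n * (exp (s * u) * exp (-(n * u))) := by
        rw [exp_neg, mul_pow, ← exp_nat_mul]; field_simp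
    _ ≤ n.factorial / c ^ n * exp (-u) := by
        rw [← exp_add]; gcongr; nlinarith

theorem integrableOn_exp_exp {c : ℝ} (hc : 0 < c) (s b : ℝ) :
    IntegrableOn (fun u : ℝ => exp (exp u * -c) * exp (s * u)) (Ioi b) := by
  have hcont : Continuous (fun u : ℝ => exp (exp u * -c) * exp (s * u)) := by fun_prop
  obtain ⟨C, hC, h⟩ := exp_exp_le hc s
  have h0 : IntegrableOn (fun u : ℝ => exp (exp u * -c) * exp (s * u)) (Ioi 0) := by
    have hi : IntegrableOn (fun u : ℝ => C * exp (-u)) (Ioi 0) := by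
      have := (exp_neg_integrableOn_Ioi 0 one_pos).const_mul C
      simp only [neg_mul, one_mul] at this
      exact this
    refine hi.mono' hcont.aestronglyMeasurable ?_
    refine (ae_restrict_iff' measurableSet_Ioi).2 (Eventually.of_forall fun u hu => ?_)
    rw [norm_of_nonneg (by positivity)]
    exact h u (le_of_lt hu)
  have h1 : IntegrableOn (fun u : ℝ => exp (exp u * -c) * exp (s * u)) (Icc b 0) :=
    hcont.integrableOn_Icc
  refine (h1.union h0).mono_set fun u hu => ?_
  rcases le_or_gt u 0 with h' | h'
  · exact Or.inl ⟨le_of_lt hu, h'⟩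
  · exact Or.inr h'

theorem integrable_exp_exp {c s : ℝ} (hc : 0 < c) (hs : 0 < s) :
    Integrable (fun u : ℝ => exp (exp u * -c) * exp (s * u)) := by
  have hcont : Continuous (fun u : ℝ => exp (exp u * -c) * exp (s * u)) := by fun_prop
  rw [← integrableOn_univ, ← Iic_union_Ioi (a := (0 : ℝ))]
  refine IntegrableOn.union ?_ (integrableOn_exp_exp hc s 0)
  refine (integrableOn_exp_mul_Iic hs 0).mono' hcont.aestronglyMeasurable ?_
  refine Eventually.of_forall fun u => ?_
  rw [norm_of_nonneg (by positivity)]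
  refine mul_le_of_le_one_left (by positivity) (exp_le_one_iff.2 ?_)
  nlinarith [exp_pos u]

theorem tendsto_exp_exp {c : ℝ} (hc : 0 < c) (s : ℝ) :
    Tendsto (fun u : ℝ => exp (exp u * -c) * exp (s * u)) atTop (𝓝 0) := by
  obtain ⟨C, hC, h⟩ := exp_exp_le hc s
  have : Tendsto (fun u : ℝ => C * exp (-u)) atTop (𝓝 0) := by
    simpa using (tendsto_exp_neg_atTop_nhds_zero).const_mul C
  refine squeeze_zero' (Eventually.of_forall fun u => by positivity) ?_ this
  filter_upwards [eventually_ge_atTop 0] with u hu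
  exact h u hu

theorem integrableOn_ker {η : ℝ} (hη : cos η < 0) (s b : ℝ) :
    IntegrableOn (fun u : ℝ => ker s (u + η * Complex.I)) (Ioi b) := by
  have hc : Continuous (fun u : ℝ => ker s (u + η * Complex.I)) :=
    (differentiable_ker s).continuous.comp (by fun_prop)
  refine (integrableOn_exp_exp (neg_pos.2 hη) s b).mono' hc.aestronglyMeasurable ?_
  refine Eventually.of_forall fun u => ?_
  rw [norm_ker, neg_neg]

theorem integrable_ker {η s : ℝ} (hη : cos η < 0) (hs : 0 < s) :
    Integrable (fun u : ℝ => ker s (u + η * Complex.I)) := by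
  have hc : Continuous (fun u : ℝ => ker s (u + η * Complex.I)) :=
    (differentiable_ker s).continuous.comp (by fun_prop)
  refine (integrable_exp_exp (neg_pos.2 hη) hs).mono' hc.aestronglyMeasurable ?_
  refine Eventually.of_forall fun u => ?_
  rw [norm_ker, neg_neg]

theorem tendsto_exp_mul_atBot {s : ℝ} (hs : 0 < s) (C : ℝ) :
    Tendsto (fun u : ℝ => C * exp (s * u)) atBot (𝓝 0) := by
  have := (tendsto_exp_atBot.comp (tendsto_id.const_mul_atBot hs)).const_mul C
  simpa using this

theorem exp_exp_mul_cos_le {u : ℝ} (hu : u ≤ 0) (v : ℝ) : exp (exp u * cos v) ≤ exp 1 := by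
  have h1 : exp u ≤ 1 := exp_le_one_iff.2 hu
  have := cos_le_one v
  apply exp_le_exp.2
  nlinarith [exp_pos u]

theorem tendsto_vertical_ker {η₁ η₂ s : ℝ} (hη : η₁ ≤ η₂) (hs : 0 < s) :
    Tendsto (fun b : ℝ => ∫ v in η₁..η₂, ker s (b + v * Complex.I)) atBot (𝓝 0) := by
  refine tendsto_vertical hη (tendsto_exp_mul_atBot hs (exp 1)) ?_
  filter_upwards [eventually_le_atBot 0] with b hb v _
  rw [norm_ker]
  exact mul_le_mul_of_nonneg_right (exp_exp_mul_cos_le hb v) (exp_pos _).le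

/-- The lines bounding a strip on which the kernel decays carry the same integral. -/
theorem line_ker_eq {η₁ η₂ s c : ℝ} (hη : η₁ ≤ η₂) (hs : 0 < s) (hc : 0 < c)
    (h : ∀ v ∈ Icc η₁ η₂, cos v ≤ -c) :
    (∫ u : ℝ, ker s (u + η₁ * Complex.I)) = ∫ u : ℝ, ker s (u + η₂ * Complex.I) := by
  have c1 : cos η₁ < 0 := by linarith [h η₁ ⟨le_rfl, hη⟩]
  have c2 : cos η₂ < 0 := by linarith [h η₂ ⟨hη, le_rfl⟩]
  have i1 := integrable_ker c1 hs
  have i2 := integrable_ker c2 hs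
  have e := fun a : ℝ => line_eq_halfStrip (a := a) hη (fun w _ => (differentiable_ker s) w) i1 i2
    (tendsto_vertical_ker hη hs)
  have t : Tendsto (fun a => halfStrip η₁ η₂ a (ker s)) atTop (𝓝 0) := by
    have tl : ∀ η : ℝ, Integrable (fun u : ℝ => ker s (u + η * Complex.I)) →
        Tendsto (fun a : ℝ => ∫ u in Ioi a, ker s (u + η * Complex.I)) atTop (𝓝 0) := by
      intro η hi
      have h1 := intervalIntegral_tendsto_integral_Ioi 0 (hi.integrableOn (s := Ioi 0)) tendsto_id
      have h2 := (tendsto_const_nhds (x := ∫ u in Ioi (0:ℝ), ker s (u + η * Complex.I))).sub h1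
      rw [sub_self] at h2
      refine h2.congr fun a => ?_
      have := intervalIntegral.integral_Ioi_sub_Ioi' (μ := volume) (a := 0) (b := a)
        (hi.integrableOn (s := Ioi 0)) (hi.integrableOn (s := Ioi a))
      simp only [id] at *
      rw [← this]; ring
    have tv := tendsto_vertical (f := ker s) hη (tendsto_exp_exp hc s) (Eventually.of_forall (by
      intro b v hv
      rw [norm_ker]
      gcongr
      exact h v hv))
    simpa [halfStrip] using ((tl η₂ i2).sub (tl η₁ i1)).add (tv.const_mul Complex.I)
  have := tendsto_nhds_unique (tendsto_const_nhds.congr fun a => e a) t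
  exact (sub_eq_zero.1 this).symm

theorem integral_exp_neg_exp {s : ℝ} (hs : 0 < s) :
    ∫ u : ℝ, exp (-exp u) * exp (s * u) = Gamma s := by
  have h := integral_image_eq_integral_abs_deriv_smul MeasurableSet.univ
    (fun x _ => (hasDerivAt_exp x).hasDerivWithinAt) exp_injective.injOn
    (fun x : ℝ => exp (-x) * x ^ (s - 1))
  rw [image_univ, range_exp, ← Gamma_eq_integral hs] at h
  rw [h, setIntegral_univ]
  congr 1
  ext u
  rw [abs_of_pos (exp_pos u), smul_eq_mul, ← exp_mul,
    show s * u = u + u * (s - 1) by ring, exp_add u]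
  ring

/-- At `Im w = ± π` the kernel is the integrand of Euler's integral up to a phase. -/
theorem line_ker_pi {s : ℝ} (hs : 0 < s) {η : ℝ} (hη : Complex.exp (η * Complex.I) = -1) :
    (∫ u : ℝ, ker s (u + η * Complex.I)) = Gamma s * Complex.exp (s * (η * Complex.I)) := by
  rw [← integral_exp_neg_exp hs, ← integral_complex_ofReal, ← integral_mul_const]
  congr 1
  ext u
  rw [ker, Complex.exp_add, hη, mul_add, Complex.exp_add]
  push_cast
  ring_nf

/-! ### Hankel's formula -/

theorem line_ker_sub {θ s : ℝ} (h1 : π / 2 < θ) (h2 : θ < π) (hs : 0 < s) :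
    (∫ u : ℝ, ker s (u + θ * Complex.I)) - (∫ u : ℝ, ker s (u + (-θ : ℝ) * Complex.I))
      = 2 * Complex.I * (Gamma s * sin (π * s) : ℝ) := by
  have hc : cos θ < 0 := cos_neg_of_pi_div_two_lt_of_lt h1 (by linarith)
  have e1 : (∫ u : ℝ, ker s (u + θ * Complex.I)) = ∫ u : ℝ, ker s (u + π * Complex.I) := by
    refine line_ker_eq h2.le hs (neg_pos.2 hc) fun v hv => ?_
    rw [neg_neg]
    exact cos_le_cos_of_nonneg_of_le_pi (by linarith [pi_pos]) hv.2 hv.1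
  have e2 : (∫ u : ℝ, ker s (u + (-π : ℝ) * Complex.I))
      = ∫ u : ℝ, ker s (u + (-θ : ℝ) * Complex.I) := by
    refine line_ker_eq (by linarith) hs (neg_pos.2 hc) fun v hv => ?_
    rw [neg_neg, ← cos_neg v]
    exact cos_le_cos_of_nonneg_of_le_pi (by linarith [pi_pos]) (by linarith [hv.1])
      (by linarith [hv.2])
  rw [e1, ← e2, line_ker_pi hs Complex.exp_pi_mul_I,
    line_ker_pi hs (by push_cast; rw [neg_mul, Complex.exp_neg, Complex.exp_pi_mul_I]; norm_num)]
  have a1 : (s : ℂ) * (π * Complex.I) = (π * s : ℂ) * Complex.I := by ring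
  have a2 : (s : ℂ) * ((-π : ℝ) * Complex.I) = (-(π * s) : ℂ) * Complex.I := by push_cast; ring
  rw [a1, a2, Complex.exp_mul_I, Complex.exp_mul_I, Complex.cos_neg, Complex.sin_neg]
  push_cast
  ring

/-- Hankel's formula for `0 < z < 1`: the arc shrinks to the origin, and the reflection formula
turns `Γ(1 - z) sin (π z)` into `π / Γ(z)`. -/
theorem halfStrip_ker_of_lt_one {θ z a : ℝ} (h1 : π / 2 < θ) (h2 : θ < π) (hz0 : 0 < z)
    (hz1 : z < 1) :
    halfStrip (-θ) θ a (ker (1 - z)) = 2 * π * Complex.I * ((Gamma z)⁻¹ : ℝ) := by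
  have hc : cos θ < 0 := cos_neg_of_pi_div_two_lt_of_lt h1 (by linarith)
  have hθ : -θ ≤ θ := by linarith [pi_pos]
  rw [← line_eq_halfStrip hθ (fun w _ => (differentiable_ker _) w)
    (integrable_ker (by rwa [cos_neg]) (by linarith)) (integrable_ker hc (by linarith))
    (tendsto_vertical_ker hθ (by linarith)), line_ker_sub h1 h2 (by linarith)]
  have hr := Real.Gamma_mul_Gamma_one_sub z
  have hsin : 0 < sin (π * z) := sin_pos_of_pos_of_lt_pi (by positivity) (by nlinarith [pi_pos])
  have hG := Gamma_pos_of_pos hz0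
  have e : Gamma (1 - z) * sin (π * (1 - z)) = π * (Gamma z)⁻¹ := by
    rw [show π * (1 - z) = π - π * z by ring, sin_pi_sub]
    rw [eq_div_iff hsin.ne'] at hr
    rw [eq_mul_inv_iff_mul_eq₀ hG.ne']
    linear_combination hr
  rw [e]; push_cast; ring

theorem hasDerivAt_ker (s : ℝ) (w : ℂ) :
    HasDerivAt (ker (s - 1)) (ker s w + (s - 1) * ker (s - 1) w) w := by
  have h1 : HasDerivAt (fun w => Complex.exp (Complex.exp w))
      (Complex.exp (Complex.exp w) * Complex.exp w) w := (Complex.hasDerivAt_exp w).cexp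
  have h2 : HasDerivAt (fun w : ℂ => Complex.exp ((s - 1 : ℝ) * w))
      (Complex.exp ((s - 1 : ℝ) * w) * ((s - 1 : ℝ) * 1)) w :=
    ((hasDerivAt_id w).const_mul ((s - 1 : ℝ) : ℂ)).cexp
  refine (h1.mul h2).congr_deriv ?_
  have : Complex.exp (s * w) = Complex.exp w * Complex.exp ((s - 1 : ℝ) * w) := by
    rw [← Complex.exp_add]; push_cast; ring_nf
  simp only [ker, this]
  push_cast; ring

/-- Integration by parts along the contour; it mirrors `Γ(z + 1) = z Γ(z)` for `z = 1 - s`. -/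
theorem halfStrip_ker_rec {θ : ℝ} (hc : cos θ < 0) (s a : ℝ) :
    halfStrip (-θ) θ a (ker s) = (1 - s) * halfStrip (-θ) θ a (ker (s - 1)) := by
  have ray : ∀ η : ℝ, cos η < 0 →
      (∫ u in Ioi a, ker s (u + η * Complex.I))
        + (s - 1) * (∫ u in Ioi a, ker (s - 1) (u + η * Complex.I))
        = - ker (s - 1) (a + η * Complex.I) := by
    intro η hη
    have hd : ∀ u : ℝ, HasDerivAt (fun u : ℝ => ker (s - 1) (u + η * Complex.I))
        (ker s (u + η * Complex.I) + (s - 1) * ker (s - 1) (u + η * Complex.I)) u := by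
      intro u
      have h1 : HasDerivAt (fun u : ℝ => (u : ℂ) + η * Complex.I) 1 u :=
        (Complex.ofRealCLM.hasDerivAt (x := u)).add_const _
      exact ((hasDerivAt_ker s (u + η * Complex.I)).comp u h1).congr_deriv (mul_one _)
    have ht : Tendsto (fun u : ℝ => ker (s - 1) (u + η * Complex.I)) atTop (𝓝 0) := by
      rw [tendsto_zero_iff_norm_tendsto_zero]
      refine (tendsto_exp_exp (neg_pos.2 hη) (s - 1)).congr fun u => ?_
      rw [norm_ker, neg_neg]
    have i1 := integrableOn_ker hη s a
    have i2 := (integrableOn_ker hη (s - 1) a).const_mul ((s : ℂ) - 1)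
    have := integral_Ioi_of_hasDerivAt_of_tendsto (hd a).continuousAt.continuousWithinAt
      (fun u _ => hd u) (i1.add i2) ht
    rw [integral_add i1 i2, integral_const_mul] at this
    rw [this]; ring
  have vert : Complex.I * (∫ v in (-θ)..θ, ker s (a + v * Complex.I))
        + Complex.I * ((s - 1) * (∫ v in (-θ)..θ, ker (s - 1) (a + v * Complex.I)))
        = ker (s - 1) (a + θ * Complex.I) - ker (s - 1) (a + (-θ : ℝ) * Complex.I) := by
    have hd : ∀ v : ℝ, HasDerivAt (fun v : ℝ => ker (s - 1) (a + v * Complex.I))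
        ((ker s (a + v * Complex.I) + (s - 1) * ker (s - 1) (a + v * Complex.I)) * Complex.I) v := by
      intro v
      have h1 : HasDerivAt (fun v : ℝ => (a : ℂ) + v * Complex.I) Complex.I v := by
        simpa using ((Complex.ofRealCLM.hasDerivAt (x := v)).mul_const Complex.I).const_add (a : ℂ)
      exact (hasDerivAt_ker s (a + v * Complex.I)).comp v h1
    have c : ∀ s : ℝ, Continuous fun v : ℝ => ker s (a + v * Complex.I) := fun s =>
      (differentiable_ker s).continuous.comp (by fun_prop)
    have i1 := (c s).intervalIntegrable (μ := volume) (-θ) θ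
    have i2 := ((c (s - 1)).intervalIntegrable (μ := volume) (-θ) θ).const_mul ((s : ℂ) - 1)
    have := intervalIntegral.integral_eq_sub_of_hasDerivAt (fun v _ => hd v)
      ((i1.add i2).mul_const Complex.I)
    rw [intervalIntegral.integral_mul_const, intervalIntegral.integral_add i1 i2,
      intervalIntegral.integral_const_mul] at this
    rw [← this]; ring
  have r1 := ray θ hc
  have r2 := ray (-θ) (by rwa [cos_neg])
  simp only [halfStrip]
  linear_combination r1 - r2 + vert

/-- For `a ≥ 0` the integrands with `0 < s < 1` are dominated on the rays by the one at `s = 1`. -/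
theorem tendsto_halfStrip_ker {θ a : ℝ} (hc : cos θ < 0) (ha : 0 ≤ a) :
    Tendsto (fun s : ℝ => halfStrip (-θ) θ a (ker s)) (𝓝[>] 0) (𝓝 (halfStrip (-θ) θ a (ker 0))) := by
  have hcs : ∀ w : ℂ, Continuous fun s : ℝ => ker s w := fun w => by unfold ker; fun_prop
  have ray : ∀ η : ℝ, cos η < 0 →
      Tendsto (fun s : ℝ => ∫ u in Ioi a, ker s (u + η * Complex.I)) (𝓝[>] 0)
        (𝓝 (∫ u in Ioi a, ker 0 (u + η * Complex.I))) := by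
    intro η hη
    refine tendsto_integral_filter_of_dominated_convergence
      (fun u => exp (exp u * - -cos η) * exp (1 * u)) ?_ ?_
      (integrableOn_exp_exp (neg_pos.2 hη) 1 a) ?_
    · exact Eventually.of_forall fun s => (integrableOn_ker hη s a).aestronglyMeasurable
    · filter_upwards [Ioo_mem_nhdsGT (zero_lt_one (α := ℝ))] with s hs
      refine (ae_restrict_iff' measurableSet_Ioi).2 (Eventually.of_forall fun u hu => ?_)
      have hu' : a < u := hu
      rw [norm_ker, neg_neg]
      gcongr
      · linarith
      · exact hs.2.le
    · exact Eventually.of_forall fun u => ((hcs _).tendsto 0).mono_left nhdsWithin_le_nhds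
  have vert : Continuous fun s : ℝ => ∫ v in (-θ)..θ, ker s (a + v * Complex.I) := by
    apply intervalIntegral.continuous_parametric_intervalIntegral_of_continuous'
    unfold ker; fun_prop
  exact ((ray θ hc).sub (ray (-θ) (by rwa [cos_neg]))).add
    (((vert.tendsto 0).mono_left nhdsWithin_le_nhds).const_mul Complex.I)

/-- **Hankel's formula** for the reciprocal Gamma function at real `z > 0`. Integer values of `z`
are not reached from `(0, 1)` by the recurrence, hence the limit at `z = 1`. -/
theorem hankel {θ a z : ℝ} (h1 : π / 2 < θ) (h2 : θ < π) (ha : 0 ≤ a) (hz : 0 < z) :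
    halfStrip (-θ) θ a (ker (1 - z)) = 2 * π * Complex.I * ((Gamma z)⁻¹ : ℝ) := by
  have hc : cos θ < 0 := cos_neg_of_pi_div_two_lt_of_lt h1 (by linarith)
  have main : ∀ n : ℕ, ∀ z : ℝ, 0 < z → z ≤ n + 1 →
      halfStrip (-θ) θ a (ker (1 - z)) = 2 * π * Complex.I * ((Gamma z)⁻¹ : ℝ) := by
    intro n
    induction n with
    | zero =>
      intro z hz hz1
      rcases lt_or_eq_of_le hz1 with h | h
      · exact halfStrip_ker_of_lt_one h1 h2 hz (by simpa using h)
      · have hz1 : z = 1 := by simpa using h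
        subst hz1
        have t1 := tendsto_halfStrip_ker hc ha
        have hG : ContinuousAt Gamma 1 :=
          (differentiableAt_Gamma fun m => by
            have : (0 : ℝ) ≤ m := m.cast_nonneg
            linarith).continuousAt
        have t2 : Tendsto (fun s : ℝ => 2 * π * Complex.I * ((Gamma (1 - s))⁻¹ : ℝ)) (𝓝[>] 0)
            (𝓝 (2 * π * Complex.I * ((Gamma 1)⁻¹ : ℝ))) := by
          have hs : Tendsto (fun s : ℝ => 1 - s) (𝓝[>] 0) (𝓝 1) := by
            have : Continuous fun s : ℝ => 1 - s := by fun_prop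
            simpa using (this.tendsto 0).mono_left nhdsWithin_le_nhds
          exact ((Complex.continuous_ofReal.tendsto _).comp
            ((hG.tendsto.comp hs).inv₀ (by simp))).const_mul _
        rw [sub_self]
        refine tendsto_nhds_unique t1 (t2.congr' ?_)
        filter_upwards [Ioo_mem_nhdsGT (zero_lt_one (α := ℝ))] with s hs
        have := halfStrip_ker_of_lt_one (a := a) h1 h2 (z := 1 - s) (by linarith [hs.2])
          (by linarith [hs.1])
        rw [sub_sub_cancel] at this
        exact this.symm
    | succ n ih =>
      intro z hz hzn
      rcases le_or_gt z 1 with h | h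
      · exact ih z hz (h.trans (by simp))
      · have e := ih (z - 1) (by linarith) (by push_cast at hzn; linarith)
        rw [halfStrip_ker_rec hc, show 1 - (z - 1) - 1 = 1 - z by ring] at e
        have hG : Gamma z = (z - 1) * Gamma (z - 1) := by
          have := Gamma_add_one (s := z - 1) (by linarith)
          rwa [sub_add_cancel] at this
        have hz1 : ((z - 1 : ℝ) : ℂ) ≠ 0 := Complex.ofReal_ne_zero.2 (by linarith)
        have e' : ((z - 1 : ℝ) : ℂ) * halfStrip (-θ) θ a (ker (1 - z))
            = 2 * π * Complex.I * ((Gamma (z - 1))⁻¹ : ℝ) := by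
          rw [← e]; push_cast; ring
        rw [hG, mul_inv]
        apply mul_left_cancel₀ hz1
        rw [e']
        push_cast at hz1 ⊢
        field_simp
  obtain ⟨n, hn⟩ := exists_nat_ge z
  exact main n z hz (by linarith)


/-! ### The Mittag-Leffler function on the negative axis -/

/-- The one-parameter Mittag-Leffler function `E_ρ` at `-y`. -/
noncomputable def mittag (ρ y : ℝ) : ℝ := ∑' k : ℕ, (-y) ^ k / Gamma (ρ * k + 1)

/-- The integrand `exp ζ · ζ ^ (ρ - 1) / (ζ ^ ρ + y) dζ` of the contour integral for `E_ρ (-y)`,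
in the coordinate `ζ = exp w`. -/
noncomputable def mlKer (ρ y : ℝ) (w : ℂ) : ℂ := ker ρ w / (Complex.exp (ρ * w) + y)

theorem norm_term (ρ y u v : ℝ) (hy : 0 ≤ y) (k : ℕ) :
    ‖((-y : ℝ) : ℂ) ^ k * ker (1 - (ρ * k + 1)) (u + v * Complex.I)‖
      = exp (exp u * cos v) * (y * exp (-(ρ * u))) ^ k := by
  rw [norm_mul, norm_pow, Complex.norm_real, norm_neg, norm_of_nonneg hy, norm_ker, mul_pow,
    ← exp_nat_mul]
  rw [show (1 - (ρ * k + 1)) * u = k * -(ρ * u) by ring]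
  ring

/-- The geometric expansion of the integrand in powers of `-y ζ ^ (-ρ)`. -/
theorem hasSum_term {ρ y u : ℝ} (hy : 0 ≤ y) (v : ℝ) (h : y * exp (-(ρ * u)) < 1) :
    HasSum (fun k : ℕ => ((-y : ℝ) : ℂ) ^ k * ker (1 - (ρ * k + 1)) (u + v * Complex.I))
      (mlKer ρ y (u + v * Complex.I)) := by
  set w : ℂ := u + v * Complex.I with hw
  have hn : ‖-(y : ℂ) * Complex.exp (-(ρ * w))‖ < 1 := by
    rw [norm_mul, norm_neg, Complex.norm_real, norm_of_nonneg hy, Complex.norm_exp]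
    simpa [hw] using h
  have hs := (hasSum_geometric_of_norm_lt_one hn).mul_left (Complex.exp (Complex.exp w))
  have e : Complex.exp (Complex.exp w) * (1 - -(y : ℂ) * Complex.exp (-(ρ * w)))⁻¹
      = mlKer ρ y w := by
    have hE := Complex.exp_ne_zero (ρ * w)
    have h2 : (1 - -(y : ℂ) * Complex.exp (-(ρ * w)))
        = (Complex.exp (ρ * w) + y) * (Complex.exp (ρ * w))⁻¹ := by
      rw [Complex.exp_neg]; field_simp; ring
    rw [h2, mul_inv, inv_inv, mlKer, ker, div_eq_mul_inv]
    ring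
  rw [e] at hs
  refine hs.congr_fun fun k => ?_
  rw [ker, mul_pow, ← Complex.exp_nat_mul]
  push_cast
  rw [show (1 - ((ρ : ℂ) * k + 1)) * w = k * -(ρ * w) by ring]
  ring

theorem continuous_term (c : ℂ) (s : ℝ) {g : ℝ → ℂ} (hg : Continuous g) :
    Continuous fun u : ℝ => c * ker s (g u) :=
  continuous_const.mul ((differentiable_ker s).continuous.comp hg)

theorem hasSum_halfStrip {ρ y θ a : ℝ} (hρ : 0 < ρ) (hc : cos θ < 0) (hy : 0 ≤ y)
    (hq : y * exp (-(ρ * a)) < 1) :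
    HasSum (fun k : ℕ => ((-y : ℝ) : ℂ) ^ k * halfStrip (-θ) θ a (ker (1 - (ρ * k + 1))))
      (halfStrip (-θ) θ a (mlKer ρ y)) := by
  set q := y * exp (-(ρ * a)) with hqd
  have hq0 : 0 ≤ q := by positivity
  have hmono : ∀ u : ℝ, a ≤ u → y * exp (-(ρ * u)) ≤ q := fun u hu => by
    rw [hqd]; gcongr
  have ray : ∀ η : ℝ, cos η < 0 →
      HasSum (fun k : ℕ => ((-y : ℝ) : ℂ) ^ k *
        ∫ u in Ioi a, ker (1 - (ρ * k + 1)) (u + η * Complex.I))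
        (∫ u in Ioi a, mlKer ρ y (u + η * Complex.I)) := by
    intro η hη
    simp_rw [← integral_const_mul]
    refine hasSum_integral_of_dominated_convergence
      (fun k u => exp (exp u * cos η) * q ^ k) ?_ ?_ ?_ ?_ ?_
    · exact fun k => (continuous_term _ _ (by fun_prop)).aestronglyMeasurable
    · refine fun k => (ae_restrict_iff' measurableSet_Ioi).2 (Eventually.of_forall fun u hu => ?_)
      rw [norm_term _ _ _ _ hy]
      gcongr
      exact hmono u (le_of_lt hu)
    · exact Eventually.of_forall fun u => (summable_geometric_of_lt_one hq0 hq).mul_left _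
    · simp_rw [tsum_mul_left]
      have := integrableOn_exp_exp (neg_pos.2 hη) 0 a
      simp only [neg_neg, zero_mul, exp_zero, mul_one] at this
      exact this.mul_const _
    · refine (ae_restrict_iff' measurableSet_Ioi).2 (Eventually.of_forall fun u hu => ?_)
      exact hasSum_term hy η ((hmono u (le_of_lt hu)).trans_lt hq)
  have vert : HasSum (fun k : ℕ => ((-y : ℝ) : ℂ) ^ k *
        ∫ v in (-θ)..θ, ker (1 - (ρ * k + 1)) (a + v * Complex.I))
        (∫ v in (-θ)..θ, mlKer ρ y (a + v * Complex.I)) := by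
    simp_rw [← intervalIntegral.integral_const_mul]
    refine intervalIntegral.hasSum_integral_of_dominated_convergence
      (fun k v => exp (exp a * cos v) * q ^ k) ?_ ?_ ?_ ?_ ?_
    · exact fun k => (continuous_term _ _ (by fun_prop)).aestronglyMeasurable
    · exact fun k => Eventually.of_forall fun v _ => (norm_term _ _ _ _ hy _).le
    · exact Eventually.of_forall fun u _ => (summable_geometric_of_lt_one hq0 hq).mul_left _
    · simp_rw [tsum_mul_left]
      exact Continuous.intervalIntegrable (by fun_prop) _ _
    · exact Eventually.of_forall fun v _ => hasSum_term hy v hq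
  have h := ((ray θ hc).sub (ray (-θ) (by rwa [cos_neg]))).add (vert.mul_left Complex.I)
  refine h.congr_fun fun k => ?_
  simp only [halfStrip]
  ring

/-- Hankel's formula applied term by term to the Mittag-Leffler series. -/
theorem hasSum_mittag {ρ y θ a : ℝ} (hρ : 0 < ρ) (h1 : π / 2 < θ) (h2 : θ < π) (hy : 0 ≤ y)
    (ha : 0 ≤ a) (hq : y * exp (-(ρ * a)) < 1) :
    HasSum (fun k : ℕ => (((-y) ^ k / Gamma (ρ * k + 1) : ℝ) : ℂ))
      (halfStrip (-θ) θ a (mlKer ρ y) / (2 * π * Complex.I)) := by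
  have hc : cos θ < 0 := cos_neg_of_pi_div_two_lt_of_lt h1 (by linarith)
  have hpi : (2 * π * Complex.I : ℂ) ≠ 0 := by simp [pi_ne_zero]
  refine ((hasSum_halfStrip hρ hc hy hq).div_const (2 * π * Complex.I)).congr_fun fun k => ?_
  rw [hankel h1 h2 ha (by positivity)]
  push_cast
  field_simp

theorem exists_height {ρ y : ℝ} (hρ : 0 < ρ) : ∃ a : ℝ, 0 ≤ a ∧ y * exp (-(ρ * a)) < 1 := by
  have : Tendsto (fun a : ℝ => y * exp (-(ρ * a))) atTop (𝓝 0) := by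
    simpa using (tendsto_exp_neg_atTop_nhds_zero.comp (tendsto_id.const_mul_atTop hρ)).const_mul y
  obtain ⟨a, h1, h2⟩ := ((eventually_ge_atTop 0).and (this.eventually_lt_const one_pos)).exists
  exact ⟨a, h1, h2⟩

theorem summable_mittag {ρ y : ℝ} (hρ : 0 < ρ) (hy : 0 ≤ y) :
    Summable fun k : ℕ => (-y) ^ k / Gamma (ρ * k + 1) := by
  obtain ⟨a, ha, hq⟩ := exists_height (y := y) hρ
  have := (hasSum_mittag (θ := 3 * π / 4) hρ (by linarith [pi_pos]) (by linarith [pi_pos])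
    hy ha hq).summable
  exact Complex.summable_ofReal.1 this

/-- Distance from `-y` to the ray of direction `exp (i ρ v)`. -/
theorem norm_den_ge (ρ y u v : ℝ) :
    y * |sin (ρ * v)| ≤ ‖Complex.exp (ρ * (u + v * Complex.I)) + y‖ := by
  have e : Complex.exp (ρ * (u + v * Complex.I))
      = (exp (ρ * u) * cos (ρ * v) : ℝ) + (exp (ρ * u) * sin (ρ * v) : ℝ) * Complex.I := by
    rw [show (ρ : ℂ) * (u + v * Complex.I) = (ρ * u : ℝ) + (ρ * v : ℝ) * Complex.I by
      push_cast; ring, Complex.exp_add, Complex.exp_mul_I]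
    push_cast
    ring
  refine le_of_sq_le_sq ?_ (norm_nonneg _)
  rw [Complex.sq_norm, Complex.normSq_apply, e, mul_pow, sq_abs]
  simp only [Complex.add_re, Complex.add_im, Complex.ofReal_re, Complex.ofReal_im,
    Complex.re_ofReal_mul, Complex.im_ofReal_mul, Complex.I_re, Complex.I_im]
  have hd : ∀ E c s : ℝ, s ^ 2 + c ^ 2 = 1 → y ^ 2 * s ^ 2
      ≤ (E * c + E * s * 0 + y) * (E * c + E * s * 0 + y)
        + (0 + E * s * 1 + 0) * (0 + E * s * 1 + 0) := fun E c s h => by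
    have hsq := sq_nonneg (E + y * c)
    linear_combination hsq + (y ^ 2 - E ^ 2) * h
  simpa using hd (exp (ρ * u)) _ _ (sin_sq_add_cos_sq (ρ * v))

/-- The poles of the integrand lie on `Im w = ± π / ρ, ± 3 π / ρ, …`, outside the strip. -/
theorem den_ne_zero {ρ y θ : ℝ} (hρ : 0 < ρ) (hθ : ρ * θ < π) (hy : 0 < y) (w : ℂ)
    (hw : w.im ∈ Icc (-θ) θ) : Complex.exp (ρ * w) + y ≠ 0 := by
  intro h0
  have h1 : ρ * w.im < π := by nlinarith [hw.2]
  have h2 : -π < ρ * w.im := by nlinarith [hw.1]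
  have hge := norm_den_ge ρ y w.re w.im
  rw [Complex.re_add_im, h0, norm_zero] at hge
  have hs : sin (ρ * w.im) = 0 := by
    have : |sin (ρ * w.im)| ≤ 0 := by
      by_contra hcon
      push Not at hcon
      nlinarith [mul_pos hy hcon]
    simpa using this
  have hi : w.im = 0 := by
    have := (sin_eq_zero_iff_of_lt_of_lt h2 h1).1 hs
    exact (mul_eq_zero.1 this).resolve_left hρ.ne'
  have hw' : w = (w.re : ℂ) := Complex.ext rfl (by simp [hi])
  rw [hw'] at h0
  have h3 : exp (ρ * w.re) + y = 0 := by exact_mod_cast h0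
  linarith [exp_pos (ρ * w.re)]

theorem norm_mlKer_le {ρ y v : ℝ} (hy : 0 < y) (hs : sin (ρ * v) ≠ 0) (u : ℝ) :
    ‖mlKer ρ y (u + v * Complex.I)‖
      ≤ exp (exp u * cos v) * exp (ρ * u) * (y * |sin (ρ * v)|)⁻¹ := by
  rw [mlKer, norm_div, norm_ker, div_eq_mul_inv]
  have := abs_pos.2 hs
  gcongr
  exact norm_den_ge ρ y u v

theorem integrable_mlKer {ρ y v : ℝ} (hρ : 0 < ρ) (hy : 0 < y) (hc : cos v < 0)
    (hs : sin (ρ * v) ≠ 0) : Integrable fun u : ℝ => mlKer ρ y (u + v * Complex.I) := by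
  have hd : ∀ u : ℝ, Complex.exp (ρ * (u + v * Complex.I)) + y ≠ 0 := fun u h0 => by
    have := norm_den_ge ρ y u v
    rw [h0, norm_zero] at this
    have := mul_pos hy (abs_pos.2 hs)
    linarith
  have hcont : Continuous fun u : ℝ => mlKer ρ y (u + v * Complex.I) := by
    unfold mlKer
    exact ((differentiable_ker ρ).continuous.comp (by fun_prop)).div (by fun_prop) hd
  have hi := (integrable_exp_exp (neg_pos.2 hc) hρ).mul_const (y * |sin (ρ * v)|)⁻¹
  simp only [neg_neg] at hi
  exact hi.mono' hcont.aestronglyMeasurable (Eventually.of_forall fun u => norm_mlKer_le hy hs u)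

theorem norm_line_mlKer_le {ρ y v : ℝ} (hρ : 0 < ρ) (hy : 0 < y) (hc : cos v < 0)
    (hs : sin (ρ * v) ≠ 0) :
    ‖∫ u : ℝ, mlKer ρ y (u + v * Complex.I)‖
      ≤ (∫ u : ℝ, exp (exp u * cos v) * exp (ρ * u)) * (y * |sin (ρ * v)|)⁻¹ := by
  have hi := (integrable_exp_exp (neg_pos.2 hc) hρ).mul_const (y * |sin (ρ * v)|)⁻¹
  simp only [neg_neg] at hi
  rw [← integral_mul_const]
  exact norm_integral_le_of_norm_le hi (Eventually.of_forall fun u => norm_mlKer_le hy hs u)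

theorem tendsto_vertical_mlKer {ρ y θ : ℝ} (hθ : 0 ≤ θ) (hρ : 0 < ρ) (hy : 0 < y) :
    Tendsto (fun b : ℝ => ∫ v in (-θ)..θ, mlKer ρ y (b + v * Complex.I)) atBot (𝓝 0) := by
  refine tendsto_vertical (by linarith) (tendsto_exp_mul_atBot hρ (exp 1 * (y / 2)⁻¹)) ?_
  have hsmall : ∀ᶠ b : ℝ in atBot, 1 * exp (ρ * b) < y / 2 :=
    (tendsto_exp_mul_atBot hρ 1).eventually_lt_const (by positivity)
  filter_upwards [eventually_le_atBot 0, hsmall] with b hb hb2 v _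
  rw [mlKer, norm_div, norm_ker, div_eq_mul_inv]
  have h1 : y / 2 ≤ ‖Complex.exp (ρ * (b + v * Complex.I)) + y‖ := by
    have h := norm_sub_norm_le (y : ℂ) (-Complex.exp (ρ * (b + v * Complex.I)))
    rw [sub_neg_eq_add, norm_neg, Complex.norm_real, norm_of_nonneg hy.le, Complex.norm_exp,
      add_comm (y : ℂ)] at h
    have e : ((ρ : ℂ) * (b + v * Complex.I)).re = ρ * b := by simp
    rw [e] at h
    linarith
  calc _ ≤ exp 1 * exp (ρ * b) * (y / 2)⁻¹ := by
        have := exp_exp_mul_cos_le hb v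
        apply mul_le_mul
        · exact mul_le_mul_of_nonneg_right this (exp_pos _).le
        · exact inv_anti₀ (by positivity) h1
        · positivity
        · positivity
    _ = _ := by ring

/-- Decay of the Mittag-Leffler function on the negative axis. For `ρ < 2` the contour can be
taken at an angle `θ > π / 2` with `ρ θ < π`, so that no pole of the integrand is enclosed and the
arc can be shrunk to the origin. -/
theorem mittag_decay {ρ : ℝ} (hρ₁ : 1 < ρ) (hρ₂ : ρ < 2) :
    ∃ M : ℝ, 0 ≤ M ∧ ∀ y : ℝ, 0 < y → |mittag ρ y| ≤ M / y := by
  have hρ : 0 < ρ := by linarith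
  obtain ⟨θ, h1, h3⟩ : ∃ θ, π / 2 < θ ∧ θ < π / ρ :=
    exists_between (div_lt_div_of_pos_left pi_pos hρ hρ₂)
  have h4 : ρ * θ < π := by rw [lt_div_iff₀ hρ] at h3; linarith
  have hθ : 0 < θ := by linarith [pi_pos]
  have h2 : θ < π := by nlinarith
  have hc : cos θ < 0 := cos_neg_of_pi_div_two_lt_of_lt h1 (by linarith)
  have hs : 0 < sin (ρ * θ) := sin_pos_of_pos_of_lt_pi (by positivity) h4
  have hs' : sin (ρ * -θ) ≠ 0 := by rw [mul_neg, sin_neg]; linarith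
  set J := ∫ u : ℝ, exp (exp u * cos θ) * exp (ρ * u) with hJ
  have hJ0 : 0 ≤ J := integral_nonneg fun u => by positivity
  refine ⟨2 * (J * (sin (ρ * θ))⁻¹) / (2 * π), by positivity, fun y hy => ?_⟩
  obtain ⟨a, ha, hq⟩ := exists_height (y := y) hρ
  have e1 := (hasSum_mittag hρ h1 h2 hy.le ha hq).tsum_eq
  rw [← Complex.ofReal_tsum] at e1
  have e2 : ‖(mittag ρ y : ℂ)‖ = ‖halfStrip (-θ) θ a (mlKer ρ y)‖ / (2 * π) := by
    rw [mittag, e1, norm_div]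
    simp [abs_of_pos pi_pos]
  rw [Complex.norm_real] at e2
  rw [← Real.norm_eq_abs, e2]
  rw [← line_eq_halfStrip (by linarith) (fun w hw => ?_)
    (integrable_mlKer hρ hy (by rwa [cos_neg]) hs') (integrable_mlKer hρ hy hc hs.ne')
    (tendsto_vertical_mlKer hθ.le hρ hy)]
  · have b1 := norm_line_mlKer_le hρ hy hc hs.ne'
    have b2 := norm_line_mlKer_le (v := -θ) hρ hy (by rwa [cos_neg]) hs'
    rw [cos_neg, mul_neg, sin_neg, abs_neg] at b2
    rw [← hJ, abs_of_pos hs] at b1 b2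
    rw [div_right_comm]
    gcongr
    refine (norm_sub_le _ _).trans ((add_le_add b1 b2).trans_eq ?_)
    field_simp
    ring
  · have := den_ne_zero hρ h4 hy w hw
    unfold mlKer
    exact ((differentiable_ker ρ) w).div (by fun_prop) this

theorem mittag_bounded {ρ : ℝ} (hρ : 0 < ρ) :
    ∃ B : ℝ, 0 ≤ B ∧ ∀ y : ℝ, 0 ≤ y → y ≤ 1 → |mittag ρ y| ≤ B := by
  have hG : ∀ k : ℕ, 0 < Gamma (ρ * k + 1) := fun k => Gamma_pos_of_pos (by positivity)
  have hn : ∀ (y : ℝ), 0 ≤ y → ∀ k : ℕ, ‖(-y) ^ k / Gamma (ρ * k + 1)‖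
      = y ^ k / Gamma (ρ * k + 1) := fun y hy k => by
    rw [norm_div, norm_pow, norm_neg, norm_of_nonneg hy, norm_of_nonneg (hG k).le]
  have h1 := (summable_mittag hρ zero_le_one).norm
  refine ⟨∑' k : ℕ, ‖(-1 : ℝ) ^ k / Gamma (ρ * k + 1)‖,
    tsum_nonneg fun k => norm_nonneg _, fun y hy hy1 => ?_⟩
  have h2 := (summable_mittag hρ hy).norm
  refine (norm_tsum_le_tsum_norm h2).trans (h2.tsum_le_tsum (fun k => ?_) h1)
  rw [hn y hy, hn 1 zero_le_one]
  have := hG k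
  gcongr


/-! ### Averaging the decay of the Mittag-Leffler function -/

theorem mittag_le {ρ : ℝ} (hρ₁ : 1 < ρ) (hρ₂ : ρ < 2) :
    ∃ M : ℝ, 0 ≤ M ∧ ∀ y : ℝ, 0 < y → |mittag ρ y| ≤ M * (1 + y)⁻¹ := by
  obtain ⟨M, hM, h1⟩ := mittag_decay hρ₁ hρ₂
  obtain ⟨B, hB, h2⟩ := mittag_bounded (ρ := ρ) (by linarith)
  refine ⟨2 * (B + M), by positivity, fun y hy => ?_⟩
  rw [← div_eq_mul_inv, le_div_iff₀ (by positivity)]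
  rcases le_total y 1 with h | h
  · have := h2 y hy.le h
    nlinarith [abs_nonneg (mittag ρ y)]
  · have := h1 y hy
    rw [le_div_iff₀ hy] at this
    nlinarith [abs_nonneg (mittag ρ y)]

/-- Expanding `(μ)_k` as an Euler integral writes `G_ρ (-x)` as an average of `E_ρ (-x t)`. -/
theorem genML_eq_integral {ρ μ x : ℝ} (hμ : 0 < μ)
    (hsum : Summable fun k : ℕ =>
      (Gamma (μ + k) / Gamma μ) / Gamma (ρ * k + 1) * (-x) ^ k) :
    genML ρ μ (-x) = ∫ t in Ioi 0, exp (-t) * t ^ (μ - 1) * (Gamma μ)⁻¹ * mittag ρ (x * t) := by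
  set c : ℕ → ℝ := fun k => (-x) ^ k / Gamma (ρ * k + 1) / Gamma μ with hc
  have hk : ∀ k : ℕ, 0 < μ + k := fun k => by positivity
  have hi : ∀ k : ℕ, IntegrableOn (fun t : ℝ => exp (-t) * t ^ (μ + k - 1) * c k) (Ioi 0) :=
    fun k => (GammaIntegral_convergent (hk k)).mul_const _
  have hv : ∀ k : ℕ, ∫ t in Ioi (0 : ℝ), exp (-t) * t ^ (μ + k - 1) * c k
      = (Gamma (μ + k) / Gamma μ) / Gamma (ρ * k + 1) * (-x) ^ k := fun k => by
    rw [integral_mul_const, ← Gamma_eq_integral (hk k), hc]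
    ring
  have hnorm : ∀ k : ℕ, ∫ t in Ioi (0 : ℝ), ‖exp (-t) * t ^ (μ + k - 1) * c k‖
      = ‖(Gamma (μ + k) / Gamma μ) / Gamma (ρ * k + 1) * (-x) ^ k‖ := fun k => by
    rw [← hv k, integral_mul_const, norm_mul, ← Gamma_eq_integral (hk k),
      norm_of_nonneg (Gamma_pos_of_pos (hk k)).le, Gamma_eq_integral (hk k), ← integral_mul_const]
    refine setIntegral_congr_fun measurableSet_Ioi fun t ht => ?_
    have ht' : (0 : ℝ) < t := ht
    simp only [norm_mul]
    rw [norm_of_nonneg (exp_pos _).le, norm_of_nonneg (rpow_nonneg ht'.le _)]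
  have h := hasSum_integral_of_summable_integral_norm hi
    (hsum.norm.congr fun k => (hnorm k).symm)
  simp_rw [hv] at h
  rw [genML, h.tsum_eq]
  refine setIntegral_congr_fun measurableSet_Ioi fun t ht => ?_
  have ht' : (0 : ℝ) < t := ht
  simp only [mittag]
  rw [← tsum_mul_left]
  refine tsum_congr fun k => ?_
  rw [hc, show μ + k - 1 = (μ - 1) + k by ring, rpow_add ht', rpow_natCast, ← neg_mul, mul_pow]
  ring

theorem integrableOn_rpow_mul_inv {μ : ℝ} (hμ : 0 < μ) (hμ1 : μ < 1) :
    IntegrableOn (fun s : ℝ => s ^ (μ - 1) * (1 + s)⁻¹) (Ioi 0) := by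
  have hm : Measurable fun s : ℝ => s ^ (μ - 1) * (1 + s)⁻¹ := by fun_prop
  rw [← Ioc_union_Ioi_eq_Ioi (zero_le_one (α := ℝ))]
  refine IntegrableOn.union ?_ ?_
  · have h := (intervalIntegral.intervalIntegrable_rpow' (a := 0) (b := 1)
      (r := μ - 1) (by linarith)).1
    refine h.mono' hm.aestronglyMeasurable
      ((ae_restrict_iff' measurableSet_Ioc).2 (Eventually.of_forall fun s hs => ?_))
    have hs0 := hs.1
    rw [norm_of_nonneg (by positivity)]
    exact mul_le_of_le_one_right (by positivity) (inv_le_one_of_one_le₀ (by linarith))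
  · have h := integrableOn_Ioi_rpow_of_lt (a := μ - 1 - 1) (c := 1) (by linarith) one_pos
    refine h.mono' hm.aestronglyMeasurable
      ((ae_restrict_iff' measurableSet_Ioi).2 (Eventually.of_forall fun s hs => ?_))
    have hs0 : 0 < s := lt_trans one_pos hs
    rw [norm_of_nonneg (by positivity), rpow_sub_one hs0.ne' (μ - 1), div_eq_mul_inv]
    gcongr
    linarith

end GenML

open Real Set Filter MeasureTheory GenML in
/-- For `1 < ρ < 2` and `μ > 0`, `μ ≠ 1`, there exists a constant `C > 0` such that
`|G_ρ(−x)| ≤ C (x^{−1} + x^{−μ})` for all `x ≥ 1`. -/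
theorem genML_asymptotic_bound (ρ μ : ℝ) (hρ₁ : 1 < ρ) (hρ₂ : ρ < 2)
    (hμ : 0 < μ) (hμ1 : μ ≠ 1) :
    ∃ C : ℝ, 0 < C ∧ ∀ x : ℝ, 1 ≤ x →
      |genML ρ μ (-x)| ≤ C * (x ^ (-1 : ℝ) + x ^ (-μ)) := by
  obtain ⟨M, hM, hE⟩ := mittag_le hρ₁ hρ₂
  have hG := Gamma_pos_of_pos hμ
  suffices H : ∃ C : ℝ, 0 ≤ C ∧ ∀ x : ℝ, 1 ≤ x → ∃ g : ℝ → ℝ, IntegrableOn g (Ioi 0) ∧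
      (∀ t, 0 < t → exp (-t) * t ^ (μ - 1) * (Gamma μ)⁻¹ * (M * (1 + x * t)⁻¹) ≤ g t) ∧
      ∫ t in Ioi 0, g t ≤ C * (x ^ (-1 : ℝ) + x ^ (-μ)) by
    obtain ⟨C, hC, H⟩ := H
    refine ⟨C + 1, by positivity, fun x hx => ?_⟩
    have hx0 : 0 < x := by linarith
    have hpos : 0 ≤ x ^ (-1 : ℝ) + x ^ (-μ) := by positivity
    have hle : C * (x ^ (-1 : ℝ) + x ^ (-μ)) ≤ (C + 1) * (x ^ (-1 : ℝ) + x ^ (-μ)) := by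
      gcongr; linarith
    by_cases hsum : Summable fun k : ℕ =>
      (Gamma (μ + k) / Gamma μ) / Gamma (ρ * k + 1) * (-x) ^ k
    · obtain ⟨g, hg, hfg, hgi⟩ := H x hx
      rw [genML_eq_integral hμ hsum, ← Real.norm_eq_abs]
      refine (norm_integral_le_of_norm_le hg ?_).trans (hgi.trans hle)
      refine (ae_restrict_iff' measurableSet_Ioi).2 (Eventually.of_forall fun t ht => ?_)
      have ht' : (0 : ℝ) < t := ht
      refine le_trans ?_ (hfg t ht')
      rw [norm_mul, norm_of_nonneg (by positivity), Real.norm_eq_abs]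
      gcongr
      exact hE _ (by positivity)
    -- The series in fact always converges; a divergent one would have junk value `0`.
    · rw [genML, tsum_eq_zero_of_not_summable hsum, abs_zero]
      positivity
  rcases lt_or_gt_of_ne hμ1 with h | h
  · set J := ∫ s in Ioi (0 : ℝ), s ^ (μ - 1) * (1 + s)⁻¹ with hJ
    have hJ0 : 0 ≤ J := setIntegral_nonneg measurableSet_Ioi fun s hs => by
      have : (0 : ℝ) < s := hs
      positivity
    have hi := integrableOn_rpow_mul_inv hμ h
    refine ⟨(Gamma μ)⁻¹ * M * J, by positivity, fun x hx => ?_⟩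
    have hx0 : 0 < x := by linarith
    refine ⟨fun t => (Gamma μ)⁻¹ * M * x ^ (1 - μ) * ((x * t) ^ (μ - 1) * (1 + x * t)⁻¹),
      ?_, fun t ht => ?_, ?_⟩
    · refine Integrable.const_mul ?_ _
      have := (integrableOn_Ioi_comp_mul_left_iff
        (fun s : ℝ => s ^ (μ - 1) * (1 + s)⁻¹) 0 hx0).2 (by simpa using hi)
      exact this
    -- Only `exp (-t) ≤ 1` is used here: for `μ < 1` the scaling `s = x * t` gives `x ^ (-μ)`.
    · have e : x ^ (1 - μ) * (x * t) ^ (μ - 1) = t ^ (μ - 1) := by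
        rw [mul_rpow hx0.le ht.le, ← mul_assoc, ← rpow_add hx0]
        simp
      have e1 : exp (-t) ≤ 1 := exp_le_one_iff.2 (by linarith)
      calc _ ≤ 1 * t ^ (μ - 1) * (Gamma μ)⁻¹ * (M * (1 + x * t)⁻¹) := by gcongr
        _ = _ := by rw [← e]; ring
    · rw [integral_const_mul, integral_comp_mul_left_Ioi
        (fun s : ℝ => s ^ (μ - 1) * (1 + s)⁻¹) 0 hx0, mul_zero, ← hJ, smul_eq_mul]
      have e : x ^ (1 - μ) * x⁻¹ = x ^ (-μ) := by
        rw [← rpow_neg_one, ← rpow_add hx0]; ring_nf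
      calc _ = (Gamma μ)⁻¹ * M * J * (x ^ (1 - μ) * x⁻¹) := by ring
        _ ≤ _ := by
          rw [e]
          gcongr
          linarith [rpow_pos_of_pos hx0 (-1)]
  · have hG1 : 0 < Gamma (μ - 1) := Gamma_pos_of_pos (by linarith)
    refine ⟨Gamma (μ - 1) * ((Gamma μ)⁻¹ * M), by positivity, fun x hx => ?_⟩
    have hx0 : 0 < x := by linarith
    refine ⟨fun t => exp (-t) * t ^ (μ - 1 - 1) * ((Gamma μ)⁻¹ * M * x⁻¹),
      (GammaIntegral_convergent (by linarith)).mul_const _, fun t ht => ?_, ?_⟩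
    -- For `μ > 1` the factor `1 / (x * t)` leaves the convergent integral `Γ(μ - 1)`.
    · have e : (1 + x * t)⁻¹ ≤ (x * t)⁻¹ := inv_anti₀ (by positivity) (by linarith)
      calc _ ≤ exp (-t) * t ^ (μ - 1) * (Gamma μ)⁻¹ * (M * (x * t)⁻¹) := by gcongr
        _ = _ := by simp only [rpow_sub_one ht.ne' (μ - 1), mul_inv]; ring
    · rw [integral_mul_const, ← Gamma_eq_integral (by linarith), rpow_neg_one, ← mul_assoc]
      gcongr
      linarith [rpow_pos_of_pos hx0 (-μ)]
end
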